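/- arXiv:1606.04031 — 3 statements merged into one kernel-verified Lean document; each statement's English description precedes it below -/
import Mathlib

section
/- Borsuk–Ulam theorem: For every continuous map f : S^n → ℝ^n (where S^n ⊆ ℝ^{n+1} is the unit sphere), there exists a point x ∈ S^n such that f(x) = f(-x). -/
/-!
An odd map `g` from the sphere to `ℝⁿ` gives `n` odd sign functions with values in `ℤ/2`, that is,
0-cochains `sᵢ` with `sᵢ(-x) = sᵢ(x) + 1`. The cup product of their coboundaries takes the value 1
on every chain made of simplices that fills a hemisphere of dimension `n`: by Stokes' formula its
value on a hemisphere `d` with boundary `c + (-c)` is the value of `s₀ ∪ δs₁ ∪ ⋯` on `c + (-c)`,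
which by oddness is the value of `δs₁ ∪ ⋯` on the hemisphere `c` of one dimension less. Hemispheres
can be filled with arbitrarily small simplices, so there are arbitrarily small simplices on which
every coordinate of `g` changes sign, and `g` has a zero by compactness. The theorem is the case of
`g(x) = f(x) - f(-x)`.
-/

namespace BorsukUlam

/-- The mod 2 chains on tuples of points of `α`, all dimensions together: a tuple of length `k + 1`
is a `k`-simplex, and the empty tuple is the simplex of the augmentation. -/
abbrev Chain (α : Type*) := List α →₀ ZMod 2

/-- The chain consisting of a single simplex. -/
noncomputable abbrev simplex {α : Type*} (l : List α) : Chain α := Finsupp.single l 1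

/-- The cone with apex `a` over a chain. -/
noncomputable def cone {α : Type*} (a : α) : Chain α →ₗ[ZMod 2] Chain α :=
  Finsupp.lmapDomain (ZMod 2) (ZMod 2) (List.cons a)

/-- The chain map induced by a map of vertices. -/
noncomputable def push {α β : Type*} (f : α → β) : Chain α →ₗ[ZMod 2] Chain β :=
  Finsupp.lmapDomain (ZMod 2) (ZMod 2) (List.map f)

/-- The sum of the facets of a simplex. -/
noncomputable def facets {α : Type*} : List α → Chain α
  | [] => 0
  | a :: l => simplex l + cone a (facets l)

/-- The augmented boundary operator. -/
noncomputable def boundary {α : Type*} : Chain α →ₗ[ZMod 2] Chain α :=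
  Finsupp.linearCombination (ZMod 2) facets

/-- The prism between the images of a simplex under two maps of vertices. -/
noncomputable def prismOn {α β : Type*} (f g : α → β) : List α → Chain β
  | [] => 0
  | a :: l => simplex (f a :: g a :: l.map g) + cone (f a) (prismOn f g l)

/-- The prism operator, a chain homotopy between `push f` and `push g`. -/
noncomputable def prism {α β : Type*} (f g : α → β) : Chain α →ₗ[ZMod 2] Chain β :=
  Finsupp.linearCombination (ZMod 2) (prismOn f g)

/-- The evaluation of a mod 2 cochain, given by its values on simplices. -/
noncomputable def eval {α : Type*} (ψ : List α → ZMod 2) : Chain α →ₗ[ZMod 2] ZMod 2 :=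
  Finsupp.linearCombination (ZMod 2) ψ

/-- The chains all of whose simplices belong to `T`. -/
abbrev chainsOn {α : Type*} (T : Set (List α)) : Submodule (ZMod 2) (Chain α) :=
  Finsupp.supported (ZMod 2) (ZMod 2) T

section Chains

variable {α β M : Type*} [AddCommMonoid M] [Module (ZMod 2) M]

theorem chain_hom_ext {S T : Chain α →ₗ[ZMod 2] M}
    (h : ∀ l, S (simplex l) = T (simplex l)) : S = T :=
  Finsupp.lhom_ext' fun l => LinearMap.ext_ring (h l)

@[simp] theorem cone_simplex (a : α) (l : List α) : cone a (simplex l) = simplex (a :: l) := by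
  simp [cone]

@[simp] theorem push_simplex (f : α → β) (l : List α) :
    push f (simplex l) = simplex (l.map f) := by
  simp [push]

@[simp] theorem boundary_simplex (l : List α) : boundary (simplex l) = facets l := by
  simp [boundary]

@[simp] theorem prism_simplex (f g : α → β) (l : List α) :
    prism f g (simplex l) = prismOn f g l := by
  simp [prism]

@[simp] theorem eval_simplex (ψ : List α → ZMod 2) (l : List α) : eval ψ (simplex l) = ψ l := by
  simp [eval]

theorem boundary_cone (a : α) (c : Chain α) :
    boundary (cone a c) = c + cone a (boundary c) := by
  have : boundary ∘ₗ cone a = LinearMap.id + cone a ∘ₗ boundary :=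
    chain_hom_ext fun l => by simp [facets]
  exact LinearMap.congr_fun this c

theorem push_cone (f : α → β) (a : α) (c : Chain α) :
    push f (cone a c) = cone (f a) (push f c) := by
  have : push f ∘ₗ cone a = cone (f a) ∘ₗ push f := chain_hom_ext fun l => by simp
  exact LinearMap.congr_fun this c

theorem push_facets (f : α → β) (l : List α) : push f (facets l) = facets (l.map f) := by
  induction l with
  | nil => simp [facets]
  | cons a l ih => simp [facets, push_cone, ih]

theorem boundary_push (f : α → β) (c : Chain α) :
    boundary (push f c) = push f (boundary c) := by
  have : boundary ∘ₗ push f = push f ∘ₗ boundary :=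
    chain_hom_ext fun l => by simp [push_facets]
  exact LinearMap.congr_fun this c

theorem push_push_of_involutive {f : α → α} (hf : Function.Involutive f) (c : Chain α) :
    push f (push f c) = c := by
  have : push f ∘ₗ push f = LinearMap.id :=
    chain_hom_ext fun l => by simp [hf.comp_self]
  exact LinearMap.congr_fun this c

theorem push_id (c : Chain α) : push id c = c := by
  have : push (id : α → α) = LinearMap.id := chain_hom_ext fun l => by simp
  exact LinearMap.congr_fun this c

theorem prism_cone (f g : α → β) (a : α) (c : Chain α) :
    prism f g (cone a c) =
      cone (f a) (cone (g a) (push g c)) + cone (f a) (prism f g c) := by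
  have : prism f g ∘ₗ cone a =
      cone (f a) ∘ₗ cone (g a) ∘ₗ push g + cone (f a) ∘ₗ prism f g :=
    chain_hom_ext fun l => by simp [prismOn]
  exact LinearMap.congr_fun this c

theorem boundary_prismOn (f g : α → β) (l : List α) :
    boundary (prismOn f g l) =
      simplex (l.map f) + simplex (l.map g) + prism f g (facets l) := by
  induction l with
  | nil => simp [prismOn, facets, ZModModule.add_self]
  | cons a l ih =>
    simp only [prismOn, facets, map_add, boundary_simplex, boundary_cone, ih, prism_cone,
      push_facets, prism_simplex, cone_simplex, List.map_cons]
    linear_combination (norm := module) ZModModule.add_self (simplex (f a :: l.map g))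

theorem boundary_prism (f g : α → β) (c : Chain α) :
    boundary (prism f g c) = push f c + push g c + prism f g (boundary c) := by
  have : boundary ∘ₗ prism f g = push f + push g + prism f g ∘ₗ boundary :=
    chain_hom_ext fun l => by simp [boundary_prismOn]
  exact LinearMap.congr_fun this c

theorem boundary_sum_prism (φ : ℕ → α → β) (N : ℕ) {z : Chain α} (hz : boundary z = 0) :
    boundary (∑ j ∈ Finset.range N, prism (φ j) (φ (j + 1)) z) = push (φ 0) z + push (φ N) z := by
  have hstep : ∀ j, boundary (prism (φ j) (φ (j + 1)) z) = push (φ (j + 1)) z - push (φ j) z := by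
    intro j
    rw [boundary_prism, hz, map_zero, add_zero, ZModModule.sub_eq_add, add_comm]
  rw [map_sum, Finset.sum_congr rfl fun j _ => hstep j,
    Finset.sum_range_sub fun j => push (φ j) z, ZModModule.sub_eq_add, add_comm]

theorem boundary_sum_prism_add_cone (φ : ℕ → α → β) (N : ℕ) (p : β) {z : Chain α}
    (hz : boundary z = 0) :
    boundary (∑ j ∈ Finset.range N, prism (φ j) (φ (j + 1)) z + cone p (push (φ N) z)) =
      push (φ 0) z := by
  rw [map_add, boundary_sum_prism φ N hz, boundary_cone, boundary_push, hz, map_zero, map_zero,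
    add_zero, add_assoc, ZModModule.add_self, add_zero]

theorem eval_cone (ψ : List α → ZMod 2) (a : α) (c : Chain α) :
    eval ψ (cone a c) = eval (fun l => ψ (a :: l)) c :=
  Finsupp.linearCombination_mapDomain _ _ _

theorem eval_push (ψ : List β → ZMod 2) (f : α → β) (c : Chain α) :
    eval ψ (push f c) = eval (fun l => ψ (l.map f)) c :=
  Finsupp.linearCombination_mapDomain _ _ _

theorem eval_mul_left (a : ZMod 2) (ψ : List α → ZMod 2) (c : Chain α) :
    eval (fun l => a * ψ l) c = a * eval ψ c := by
  have : eval (fun l => a * ψ l) = a • eval ψ := chain_hom_ext fun l => by simp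
  exact LinearMap.congr_fun this c

variable {T : Set (List α)} {c : Chain α}

theorem simplex_mem_chainsOn {l : List α} (h : l ∈ T) : simplex l ∈ chainsOn T :=
  Finsupp.single_mem_supported _ _ h

theorem chainsOn_mono {U : Set (List α)} (h : T ⊆ U) : chainsOn T ≤ chainsOn U :=
  Finsupp.supported_mono h

theorem eqOn_chainsOn {A B : Chain α →ₗ[ZMod 2] M}
    (h : ∀ l ∈ T, A (simplex l) = B (simplex l)) (hc : c ∈ chainsOn T) : A c = B c := by
  rw [chainsOn, Finsupp.supported_eq_span_single] at hc
  exact LinearMap.eqOn_span (Set.forall_mem_image.2 h) hc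

theorem map_mem_of_mem_chainsOn {A : Chain α →ₗ[ZMod 2] M} {V : Submodule (ZMod 2) M}
    (h : ∀ l ∈ T, A (simplex l) ∈ V) (hc : c ∈ chainsOn T) : A c ∈ V := by
  have hle : chainsOn T ≤ V.comap A := by
    rw [chainsOn, Finsupp.supported_eq_span_single, Submodule.span_le]
    exact Set.forall_mem_image.2 h
  exact hle hc

theorem cone_mem_chainsOn {a : α} {U : Set (List α)} (h : ∀ l ∈ T, a :: l ∈ U)
    (hc : c ∈ chainsOn T) : cone a c ∈ chainsOn U :=
  map_mem_of_mem_chainsOn (fun l hl => by simpa using simplex_mem_chainsOn (h l hl)) hc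

theorem push_mem_chainsOn {f : α → β} {U : Set (List β)} (h : ∀ l ∈ T, l.map f ∈ U)
    (hc : c ∈ chainsOn T) : push f c ∈ chainsOn U :=
  map_mem_of_mem_chainsOn (fun l hl => by simpa using simplex_mem_chainsOn (h l hl)) hc

theorem exists_ne_zero_of_eval_ne_zero {ψ : List α → ZMod 2} (hc : c ∈ chainsOn T)
    (h : eval ψ c ≠ 0) : ∃ l ∈ T, ψ l ≠ 0 := by
  contrapose! h
  exact eqOn_chainsOn (B := 0) (fun l hl => by simpa using h l hl) hc

theorem prismOn_mem_chainsOn (f g : α → β) (l : List α) :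
    prismOn f g l ∈ chainsOn {m | ∀ x ∈ m, ∃ y ∈ l, x = f y ∨ x = g y} := by
  induction l with
  | nil => exact zero_mem _
  | cons a l ih =>
    refine add_mem (simplex_mem_chainsOn ?_) (cone_mem_chainsOn (fun m hm => ?_) ih)
    · simp only [Set.mem_ofPred_eq, List.mem_cons, List.mem_map]
      grind
    · simp only [Set.mem_ofPred_eq, List.mem_cons] at hm ⊢
      grind

end Chains

section SignChanges

variable {α : Type*}

/-- The cup product of the coboundaries of the 0-cochains in the list: its value on a simplex
`[x₀, …, xₖ]` is 1 if each `sᵢ` changes between `xᵢ₋₁` and `xᵢ`, and it vanishes on simplices whose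
dimension differs from the number `k` of factors. -/
def signChanges : List (α → ZMod 2) → List α → ZMod 2
  | [], [_] => 1
  | s :: L, x :: y :: l => (s x + s y) * signChanges L (y :: l)
  | _, _ => 0

/-- The cup product of a 0-cochain with a cochain, set to 0 on the empty simplex. -/
def vertexCup (s : α → ZMod 2) (ψ : List α → ZMod 2) : List α → ZMod 2
  | [] => 0
  | x :: l => s x * ψ (x :: l)

@[simp] theorem signChanges_nil_right (L : List (α → ZMod 2)) : signChanges L [] = 0 := by
  cases L <;> rfl

theorem signChanges_eq_zero_of_const {s : α → ZMod 2} {L : List (α → ZMod 2)} (hs : s ∈ L)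
    {l : List α} (h : ∀ x ∈ l, ∀ y ∈ l, s x = s y) : signChanges L l = 0 := by
  induction L generalizing l with
  | nil => simp at hs
  | cons t L ih =>
    match l with
    | [] | [_] => rfl
    | x :: y :: l =>
      rcases List.mem_cons.1 hs with rfl | hs
      · simp [signChanges, h x (by simp) y (by simp), CharTwo.add_self_eq_zero]
      · rw [signChanges, ih hs fun a ha b hb => h a (by simp [ha]) b (by simp [hb]), mul_zero]

theorem signChanges_map {τ : α → α} {L : List (α → ZMod 2)} {l : List α}
    (h : ∀ s ∈ L, ∀ x ∈ l, s (τ x) = s x + 1) : signChanges L (l.map τ) = signChanges L l := by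
  induction L generalizing l with
  | nil => match l with
    | [] | [_] | _ :: _ :: _ => rfl
  | cons s L ih =>
    match l with
    | [] | [_] => rfl
    | x :: y :: l =>
      have ih : signChanges L ((y :: l).map τ) = signChanges L (y :: l) :=
        ih fun t ht a ha => h t (by simp [ht]) a (by simp [ha])
      simp only [List.map_cons, signChanges] at ih ⊢
      rw [ih, h s (by simp) x (by simp), h s (by simp) y (by simp)]
      linear_combination signChanges L (y :: l) * CharTwo.add_self_eq_zero (1 : ZMod 2)

theorem vertexCup_signChanges_map {τ : α → α} {s : α → ZMod 2} {L : List (α → ZMod 2)} {l : List α}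
    (hs : ∀ x ∈ l, s (τ x) = s x + 1) (hL : ∀ t ∈ L, ∀ x ∈ l, t (τ x) = t x + 1) :
    vertexCup s (signChanges L) (l.map τ) =
      vertexCup s (signChanges L) l + signChanges L l := by
  cases l with
  | nil => simp [vertexCup]
  | cons x l =>
    have hinv := signChanges_map hL
    simp only [List.map_cons, vertexCup] at hinv ⊢
    rw [hinv, hs x (by simp), add_one_mul]

/-- The cocycle condition, the facets of `x :: l` being `l` and the cones over the facets of `l`. -/
theorem eval_signChanges_cone_facets (L : List (α → ZMod 2)) (x : α) (l : List α) :
    eval (signChanges L) (cone x (facets l)) = signChanges L l := by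
  induction L generalizing x l with
  | nil =>
    match l with
    | [] | [_] => simp [facets, signChanges]
    | y :: z :: l =>
      have hzero : eval (fun _ : List α => 0) = 0 := chain_hom_ext fun m => by simp
      simp [facets, eval_cone, signChanges, hzero]
  | cons s L ih =>
    match l with
    | [] => simp [facets]
    | y :: l =>
      have hcone : eval (signChanges (s :: L)) (cone x (cone y (facets l))) =
          (s x + s y) * signChanges L l := by
        simp only [eval_cone, signChanges, eval_mul_left]
        rw [← eval_cone, ih]
      rw [facets, map_add, map_add, hcone, cone_simplex, eval_simplex]
      cases l with
      | nil => simp [signChanges]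
      | cons z l =>
        simp only [signChanges]
        linear_combination
          signChanges L (z :: l) * CharTwo.add_self_eq_zero (s x)

theorem eval_vertexCup_facets (s : α → ZMod 2) (L : List (α → ZMod 2)) (l : List α) :
    eval (vertexCup s (signChanges L)) (facets l) = signChanges (s :: L) l := by
  match l with
  | [] => simp [facets, signChanges]
  | [x] => simp [facets, vertexCup, signChanges]
  | x :: y :: l =>
    have hcone : eval (vertexCup s (signChanges L)) (cone x (facets (y :: l))) =
        s x * signChanges L (y :: l) := by
      simp only [eval_cone, vertexCup, eval_mul_left]
      rw [← eval_cone, eval_signChanges_cone_facets]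
    rw [facets, map_add, eval_simplex, hcone, vertexCup, signChanges]
    ring

theorem eval_vertexCup_boundary (s : α → ZMod 2) (L : List (α → ZMod 2)) (c : Chain α) :
    eval (vertexCup s (signChanges L)) (boundary c) = eval (signChanges (s :: L)) c := by
  have : eval (vertexCup s (signChanges L)) ∘ₗ boundary = eval (signChanges (s :: L)) :=
    chain_hom_ext fun l => by simp [eval_vertexCup_facets]
  exact LinearMap.congr_fun this c

end SignChanges

section Hemispheres

variable {α : Type*} {τ : α → α} {S : Set α} {c : Chain α}

/-- The chains that play the role of a `k`-dimensional hemisphere of a set `S` with an involution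
`τ`: a point for `k = 0`, and inductively a chain bounded by the equatorial `k`-sphere that consists
of a `k`-dimensional hemisphere and its antipode. -/
inductive IsHemisphere (τ : α → α) (S : Set α) : ℕ → Chain α → Prop
  | point {p : α} (hp : p ∈ S) : IsHemisphere τ S 0 (simplex [p])
  | step {k : ℕ} {c d : Chain α} (hc : IsHemisphere τ S k c)
      (hd : d ∈ chainsOn {l | ∀ x ∈ l, x ∈ S}) (h : boundary d = c + push τ c) :
      IsHemisphere τ S (k + 1) d

theorem IsHemisphere.mem_chainsOn {k : ℕ} (hc : IsHemisphere τ S k c) :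
    c ∈ chainsOn {l | ∀ x ∈ l, x ∈ S} := by
  cases hc with
  | point hp => exact simplex_mem_chainsOn (by simpa using hp)
  | step _ hd _ => exact hd

theorem IsHemisphere.boundary_add_push {k : ℕ} (hτ : Function.Involutive τ)
    (hc : IsHemisphere τ S k c) : boundary (c + push τ c) = 0 := by
  rw [map_add, boundary_push]
  cases hc with
  | point hp => simp [facets, ZModModule.add_self]
  | step _ _ h =>
    rw [h, map_add, push_push_of_involutive hτ, add_comm (push τ _), ZModModule.add_self]

theorem eval_vertexCup_add_push {s : α → ZMod 2} {L : List (α → ZMod 2)}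
    (hs : ∀ x ∈ S, s (τ x) = s x + 1) (hL : ∀ t ∈ L, ∀ x ∈ S, t (τ x) = t x + 1)
    (hc : c ∈ chainsOn {l | ∀ x ∈ l, x ∈ S}) :
    eval (vertexCup s (signChanges L)) (c + push τ c) = eval (signChanges L) c := by
  have hpush : eval (vertexCup s (signChanges L)) (push τ c) =
      eval (vertexCup s (signChanges L)) c + eval (signChanges L) c := by
    rw [eval_push, ← LinearMap.add_apply]
    refine eqOn_chainsOn (fun l hl => ?_) hc
    simpa using vertexCup_signChanges_map (fun x hx => hs x (hl x hx))
      fun t ht x hx => hL t ht x (hl x hx)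
  rw [map_add, hpush, CharTwo.add_cancel_left]

theorem IsHemisphere.eval_signChanges {L : List (α → ZMod 2)} (hc : IsHemisphere τ S L.length c)
    (hL : ∀ s ∈ L, ∀ x ∈ S, s (τ x) = s x + 1) : eval (signChanges L) c = 1 := by
  induction L generalizing c with
  | nil =>
    cases hc
    simp [signChanges]
  | cons s L ih =>
    cases hc with
    | step hc _ h =>
      have hs := hL s (by simp)
      have hL := fun t ht => hL t (List.mem_cons_of_mem s ht)
      rw [← eval_vertexCup_boundary, h, eval_vertexCup_add_push hs hL hc.mem_chainsOn, ih hc hL]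

theorem IsHemisphere.exists_forall_exists_ne {T : Set (List α)} {L : List (α → ZMod 2)}
    (hc : IsHemisphere τ S L.length c) (hT : c ∈ chainsOn T)
    (hL : ∀ s ∈ L, ∀ x ∈ S, s (τ x) = s x + 1) :
    ∃ l ∈ T, l ≠ [] ∧ ∀ s ∈ L, ∃ x ∈ l, ∃ y ∈ l, s x ≠ s y := by
  obtain ⟨l, hl, hne⟩ := exists_ne_zero_of_eval_ne_zero hT
    (by rw [hc.eval_signChanges hL]; exact one_ne_zero)
  refine ⟨l, hl, ?_, fun s hs => ?_⟩
  · rintro rfl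
    simp at hne
  · contrapose! hne
    exact signChanges_eq_zero_of_const hs hne

end Hemispheres

section Rips

variable {X Y : Type*} [PseudoMetricSpace X] [PseudoMetricSpace Y]

/-- The tuples of points of `A` with mutual distances at most `d`, that is, the ordered simplices of
the Vietoris–Rips complex of `A` at scale `d`. -/
def ripsTuples (A : Set X) (d : ℝ) : Set (List X) :=
  {l | (∀ x ∈ l, x ∈ A) ∧ ∀ x ∈ l, ∀ y ∈ l, dist x y ≤ d}

theorem prism_mem_chainsOn_ripsTuples {A : Set X} {S : Set Y} {d d' : ℝ} {f g : X → Y}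
    (hfS : Set.MapsTo f A S) (hgS : Set.MapsTo g A S)
    (hff : ∀ x ∈ A, ∀ y ∈ A, dist x y ≤ d → dist (f x) (f y) ≤ d')
    (hgg : ∀ x ∈ A, ∀ y ∈ A, dist x y ≤ d → dist (g x) (g y) ≤ d')
    (hfg : ∀ x ∈ A, ∀ y ∈ A, dist x y ≤ d → dist (f x) (g y) ≤ d')
    {z : Chain X} (hz : z ∈ chainsOn (ripsTuples A d)) :
    prism f g z ∈ chainsOn (ripsTuples S d') := by
  refine map_mem_of_mem_chainsOn (fun l hl => ?_) hz
  rw [prism_simplex]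
  refine chainsOn_mono (fun m hm => ?_) (prismOn_mem_chainsOn f g l)
  refine ⟨fun x hx => ?_, fun x hx x' hx' => ?_⟩
  · obtain ⟨y, hy, rfl | rfl⟩ := hm x hx
    · exact hfS (hl.1 y hy)
    · exact hgS (hl.1 y hy)
  · obtain ⟨y, hy, hxy⟩ := hm x hx
    obtain ⟨y', hy', hxy'⟩ := hm x' hx'
    have hA := hl.1 y hy
    have hA' := hl.1 y' hy'
    have hd := hl.2 y hy y' hy'
    rcases hxy with rfl | rfl <;> rcases hxy' with rfl | rfl
    · exact hff y hA y' hA' hd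
    · exact hfg y hA y' hA' hd
    · exact dist_comm (g y) (f y') ▸ hfg y' hA' y hA (dist_comm y y' ▸ hd)
    · exact hgg y hA y' hA' hd

theorem sum_prism_add_cone_mem_chainsOn_ripsTuples {A : Set X} {S : Set Y} {d d' : ℝ} (hd' : 0 ≤ d')
    {φ : ℕ → X → Y} {N : ℕ} {p : Y} (hp : p ∈ S) (hφS : ∀ j ≤ N, Set.MapsTo (φ j) A S)
    (hφN : ∀ x ∈ A, φ N x = p)
    (hφd : ∀ i ≤ N, ∀ j ≤ N, dist (i : ℝ) j ≤ 1 → ∀ x ∈ A, ∀ y ∈ A, dist x y ≤ d →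
      dist (φ i x) (φ j y) ≤ d')
    {z : Chain X} (hz : z ∈ chainsOn (ripsTuples A d)) :
    ∑ j ∈ Finset.range N, prism (φ j) (φ (j + 1)) z + cone p (push (φ N) z) ∈
      chainsOn (ripsTuples S d') := by
  refine add_mem (sum_mem fun j hj => ?_) ?_
  · have hj' : j + 1 ≤ N := Finset.mem_range.1 hj
    have hj : j ≤ N := j.le_succ.trans hj'
    exact prism_mem_chainsOn_ripsTuples (hφS j hj) (hφS (j + 1) hj') (hφd j hj j hj (by simp))
      (hφd (j + 1) hj' (j + 1) hj' (by simp)) (hφd j hj (j + 1) hj' (by simp)) hz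
  · have hpush : push (φ N) z ∈ chainsOn {l | ∀ x ∈ l, x = p} :=
      push_mem_chainsOn (fun l hl => List.forall_mem_map.2 fun x hx => hφN x (hl.1 x hx)) hz
    refine cone_mem_chainsOn (fun l hl => ?_) hpush
    have hl : ∀ x ∈ p :: l, x = p := by simpa using hl
    refine ⟨fun x hx => hl x hx ▸ hp, fun x hx y hy => ?_⟩
    rwa [hl x hx, hl y hy, dist_self]

end Rips

section Filling

variable {E : Type*} [SeminormedAddCommGroup E] [NormedSpace ℝ E]

theorem dist_lineMap_lineMap_le (x y p : E) {s t : ℝ} (hs : s ∈ Set.Icc (0 : ℝ) 1) :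
    dist (AffineMap.lineMap x p s) (AffineMap.lineMap y p t) ≤
      dist x y + dist s t * dist y p := by
  have hcontr : dist (AffineMap.lineMap x p s) (AffineMap.lineMap y p s) ≤ dist x y := by
    rw [AffineMap.lineMap_apply_module, AffineMap.lineMap_apply_module, dist_add_right,
      dist_smul₀, Real.norm_of_nonneg (sub_nonneg.2 hs.2)]
    exact mul_le_of_le_one_left dist_nonneg (sub_le_self 1 hs.1)
  calc dist (AffineMap.lineMap x p s) (AffineMap.lineMap y p t)
      ≤ dist (AffineMap.lineMap x p s) (AffineMap.lineMap y p s) +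
          dist (AffineMap.lineMap y p s) (AffineMap.lineMap y p t) := dist_triangle _ _ _
    _ ≤ dist x y + dist s t * dist y p := by
      rw [dist_lineMap_lineMap]
      gcongr

/-- The cycle is moved to `p` in `N` small steps along the segments that join its vertices to `p`,
and the resulting degenerate cycle is coned off. -/
theorem exists_boundary_eq_of_segment_subset {A S : Set E} {p : E} (hA : Bornology.IsBounded A)
    (hp : p ∈ S) (hseg : ∀ x ∈ A, segment ℝ x p ⊆ S) {d d' : ℝ} (hd : 0 ≤ d) (hdd' : d < d')
    {z : Chain E} (hz : z ∈ chainsOn (ripsTuples A d)) (hz0 : boundary z = 0) :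
    ∃ c ∈ chainsOn (ripsTuples S d'), boundary c = z := by
  obtain ⟨R, hR⟩ := hA.subset_closedBall p
  obtain ⟨N, hN⟩ := exists_nat_gt (max (R / (d' - d)) 0)
  have hN0 : (0 : ℝ) < N := (le_max_right _ _).trans_lt hN
  have hRN : 1 / N * R ≤ d' - d := by
    have := (div_lt_iff₀ (sub_pos.2 hdd')).1 ((le_max_left _ _).trans_lt hN)
    rw [one_div_mul_eq_div, div_le_iff₀ hN0]
    linarith
  have hI : ∀ j ≤ N, (j / N : ℝ) ∈ Set.Icc (0 : ℝ) 1 := fun j hj =>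
    ⟨by positivity, (div_le_one hN0).2 (mod_cast hj)⟩
  let φ : ℕ → E → E := fun j x => AffineMap.lineMap x p (j / N : ℝ)
  have hφ0 : φ 0 = id := by
    ext x
    simp [φ]
  have hφN : ∀ x, φ N x = p := by simp [φ, hN0.ne']
  have hφS : ∀ j ≤ N, Set.MapsTo (φ j) A S := fun j hj x hx =>
    hseg x hx (segment_eq_image_lineMap ℝ x p ▸ Set.mem_image_of_mem _ (hI j hj))
  have hφd : ∀ i ≤ N, ∀ j ≤ N, dist (i : ℝ) j ≤ 1 → ∀ x ∈ A, ∀ y ∈ A, dist x y ≤ d →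
      dist (φ i x) (φ j y) ≤ d' := by
    intro i hi j _ hij x _ y hy hxy
    have hst : dist (i / N : ℝ) (j / N) ≤ 1 / N := by
      rw [Real.dist_eq, ← sub_div, abs_div, abs_of_pos hN0, ← Real.dist_eq]
      gcongr
    calc dist (φ i x) (φ j y) ≤ dist x y + dist (i / N : ℝ) (j / N) * dist y p :=
        dist_lineMap_lineMap_le x y p (hI i hi)
      _ ≤ d + 1 / N * R := by
        gcongr
        exact hR hy
      _ ≤ d' := by linarith
  exact ⟨_, sum_prism_add_cone_mem_chainsOn_ripsTuples (hd.trans hdd'.le) hp hφS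
    (fun x _ => hφN x) hφd hz, by rw [boundary_sum_prism_add_cone φ N p hz0, hφ0, push_id]⟩

end Filling

section CrossPolytope

open Metric

variable {n : ℕ}

/-- The standard `k`-dimensional subsphere of the `ℓ¹` unit sphere in dimension `n + 1`. In the `ℓ¹`
norm this sphere is the boundary of the cross-polytope, so it contains the segments from the points
of `subsphere n k` to the next basis vector, which makes cones available without any projection. -/
def subsphere (n k : ℕ) : Set (PiLp 1 fun _ : Fin (n + 1) => ℝ) :=
  {x | x ∈ sphere 0 1 ∧ ∀ i : Fin (n + 1), k < i → x i = 0}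

theorem neg_mem_subsphere {k : ℕ} {x : PiLp 1 fun _ : Fin (n + 1) => ℝ} (hx : x ∈ subsphere n k) :
    -x ∈ subsphere n k :=
  ⟨by simpa using hx.1, fun i hi => by simp [hx.2 i hi]⟩

theorem single_mem_subsphere (i : Fin (n + 1)) : PiLp.single 1 i (1 : ℝ) ∈ subsphere n i := by
  refine ⟨by simp, fun j hj => ?_⟩
  have hji : j ≠ i := fun h => hj.ne' (congrArg Fin.val h)
  simp [hji]

theorem norm_lineMap_single {x : PiLp 1 fun _ : Fin (n + 1) => ℝ} (hx : ‖x‖ = 1)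
    {i : Fin (n + 1)} (hi : x i = 0) {t : ℝ} (ht : t ∈ Set.Icc (0 : ℝ) 1) :
    ‖AffineMap.lineMap x (PiLp.single 1 i (1 : ℝ)) t‖ = 1 := by
  have hcoord : ∀ j, ‖(AffineMap.lineMap x (PiLp.single 1 i (1 : ℝ)) t) j‖ =
      (1 - t) * ‖x j‖ + if j = i then t else 0 := by
    intro j
    rw [AffineMap.lineMap_apply_module]
    rcases eq_or_ne j i with rfl | hj
    · simp [hi, abs_of_nonneg ht.1]
    · simp [hj, abs_of_nonneg (sub_nonneg.2 ht.2)]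
  rw [PiLp.norm_eq_of_L1] at hx ⊢
  simp only [hcoord, Finset.sum_add_distrib, ← Finset.mul_sum, hx]
  simp

theorem segment_single_subset_subsphere {k : ℕ} (hk : k + 1 < n + 1)
    {x : PiLp 1 fun _ : Fin (n + 1) => ℝ} (hx : x ∈ subsphere n k) :
    segment ℝ x (PiLp.single 1 ⟨k + 1, hk⟩ (1 : ℝ)) ⊆ subsphere n (k + 1) := by
  rw [segment_eq_image_lineMap]
  rintro _ ⟨t, ht, rfl⟩
  refine ⟨?_, fun i hi => ?_⟩
  · rw [mem_sphere_zero_iff_norm]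
    exact norm_lineMap_single (mem_sphere_zero_iff_norm.1 hx.1) (hx.2 _ k.lt_succ_self) ht
  · rw [AffineMap.lineMap_apply_module]
    have hp := (single_mem_subsphere ⟨k + 1, hk⟩).2 i hi
    rw [PiLp.add_apply, PiLp.smul_apply, PiLp.smul_apply, hx.2 i (by omega), hp, smul_zero,
      smul_zero, add_zero]

theorem exists_isHemisphere_subsphere {k : ℕ} (hk : k < n + 1) {d : ℝ} (hd : 0 < d) :
    ∃ c ∈ chainsOn (ripsTuples (subsphere n k) d),
      IsHemisphere (-·) (sphere (0 : PiLp 1 fun _ : Fin (n + 1) => ℝ) 1) k c := by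
  induction k generalizing d with
  | zero =>
    have hp := single_mem_subsphere (0 : Fin (n + 1))
    exact ⟨simplex [PiLp.single 1 0 (1 : ℝ)],
      simplex_mem_chainsOn ⟨by simpa using hp, by simpa using hd.le⟩, .point hp.1⟩
  | succ k ih =>
    obtain ⟨c, hc, hemi⟩ := ih (by omega) (half_pos hd)
    have hneg : push (-·) c ∈ chainsOn (ripsTuples (subsphere n k) (d / 2)) := by
      refine push_mem_chainsOn (fun l hl => ⟨?_, ?_⟩) hc <;> rw [List.forall_mem_map]
      · exact fun x hx => neg_mem_subsphere (hl.1 x hx)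
      · intro x hx
        rw [List.forall_mem_map]
        exact fun y hy => (dist_neg_neg x y).trans_le (hl.2 x hx y hy)
    obtain ⟨c', hc', hb⟩ := exists_boundary_eq_of_segment_subset
      (isBounded_sphere.subset fun _ hx => hx.1) (single_mem_subsphere ⟨k + 1, hk⟩)
      (fun x hx => segment_single_subset_subsphere hk hx) (half_pos hd).le (half_lt_self hd)
      (add_mem hc hneg) (hemi.boundary_add_push neg_involutive)
    have hS : c' ∈ chainsOn {l | ∀ x ∈ l, x ∈ sphere 0 1} :=
      chainsOn_mono (fun l hl x hx => (hl.1 x hx).1) hc'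
    exact ⟨c', hc', hemi.step hS hb⟩

end CrossPolytope

section OddMaps

open Metric

/-- An odd function may vanish, so its sign is not odd; ties are broken by a linear order. -/
theorem exists_odd_zmod_two_of_odd {α : Type*} [InvolutiveNeg α] {S : Set α} (hS : ∀ x ∈ S, -x ≠ x)
    {g : α → ℝ} (hg : ∀ x ∈ S, g (-x) = -g x) :
    ∃ s : α → ZMod 2, (∀ x ∈ S, s (-x) = s x + 1) ∧
      ∀ x ∈ S, ∀ y ∈ S, s x ≠ s y → g x * g y ≤ 0 := by
  classical
  let _ : LinearOrder α := linearOrderOfSTO WellOrderingRel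
  let key : α → ℝ ×ₗ α := fun x => toLex (g x, x)
  have hkey : Function.Injective key := fun x y h => (Prod.ext_iff.1 (toLex.injective h)).2
  have hnonpos : ∀ x ∈ S, key x ≤ key (-x) → g x ≤ 0 := by
    intro x hx h
    have : g x ≤ g (-x) := Prod.Lex.monotone_fst _ _ h
    linarith [hg x hx]
  have hnonneg : ∀ x ∈ S, key (-x) ≤ key x → 0 ≤ g x := by
    intro x hx h
    have : g (-x) ≤ g x := Prod.Lex.monotone_fst _ _ h
    linarith [hg x hx]
  refine ⟨fun x => if key x < key (-x) then 1 else 0, fun x hx => ?_, fun x hx y hy h => ?_⟩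
  · rcases lt_or_gt_of_ne (hkey.ne (hS x hx)) with h | h
    · simp [h, h.not_gt]
    · simp [h, h.not_gt, CharTwo.add_self_eq_zero]
  · by_cases hx' : key x < key (-x) <;> by_cases hy' : key y < key (-y) <;>
      simp only [hx', hy', if_true, if_false, ne_eq, not_true_eq_false] at h
    · exact mul_nonpos_of_nonpos_of_nonneg (hnonpos x hx hx'.le) (hnonneg y hy (not_lt.1 hy'))
    · exact mul_nonpos_of_nonneg_of_nonpos (hnonneg x hx (not_lt.1 hx')) (hnonpos y hy hy'.le)

theorem exists_forall_exists_mul_nonpos_of_odd {n : ℕ}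
    {g : (PiLp 1 fun _ : Fin (n + 1) => ℝ) → Fin n → ℝ}
    (hodd : ∀ x ∈ sphere 0 1, g (-x) = -g x) {d : ℝ} (hd : 0 < d) :
    ∃ x ∈ sphere 0 1, ∀ i, ∃ y ∈ sphere 0 1, dist x y ≤ d ∧ g x i * g y i ≤ 0 := by
  have := IsAddTorsionFree.of_isTorsionFree ℝ (PiLp 1 fun _ : Fin (n + 1) => ℝ)
  have hne : ∀ x ∈ sphere (0 : PiLp 1 fun _ : Fin (n + 1) => ℝ) 1, -x ≠ x := fun x hx =>
    neg_ne_self.2 (ne_zero_of_mem_unit_sphere ⟨x, hx⟩)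
  choose s hs hsg using fun i =>
    exists_odd_zmod_two_of_odd hne (g := (g · i)) fun x hx => congrFun (hodd x hx) i
  obtain ⟨c, hc, hemi⟩ := exists_isHemisphere_subsphere n.lt_succ_self hd
  obtain ⟨l, hl, hnil, hchange⟩ := IsHemisphere.exists_forall_exists_ne (L := List.ofFn s)
    (by rwa [List.length_ofFn]) hc (List.forall_mem_ofFn_iff.2 hs)
  obtain ⟨x, hx⟩ := List.exists_mem_of_ne_nil l hnil
  have hlS : ∀ y ∈ l, y ∈ sphere 0 1 := fun y hy => (hl.1 y hy).1
  refine ⟨x, hlS x hx, fun i => ?_⟩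
  obtain ⟨y, hy, hxy⟩ : ∃ y ∈ l, s i x ≠ s i y := by
    obtain ⟨a, ha, b, hb, hab⟩ := hchange (s i) (List.mem_ofFn.2 ⟨i, rfl⟩)
    by_contra! hconst
    exact hab ((hconst a ha).symm.trans (hconst b hb))
  exact ⟨y, hlS y hy, hl.2 x hx y hy, hsg i x (hlS x hx) y (hlS y hy) hxy⟩

theorem exists_eq_zero_of_odd_piLp {n : ℕ} {g : (PiLp 1 fun _ : Fin (n + 1) => ℝ) → Fin n → ℝ}
    (hg : ContinuousOn g (sphere 0 1)) (hodd : ∀ x ∈ sphere 0 1, g (-x) = -g x) :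
    ∃ x ∈ sphere 0 1, g x = 0 := by
  by_contra! hne
  have hS := isCompact_sphere (0 : PiLp 1 fun _ : Fin (n + 1) => ℝ) 1
  obtain ⟨x₀, hx₀, hmin⟩ :=
    hS.exists_isMinOn ⟨_, (single_mem_subsphere (0 : Fin (n + 1))).1⟩ hg.norm
  have hpos : 0 < ‖g x₀‖ := norm_pos_iff.2 (hne x₀ hx₀)
  obtain ⟨ε, hε, hunif⟩ := Metric.uniformContinuousOn_iff.1
    (hS.uniformContinuousOn_of_continuous hg) _ hpos
  obtain ⟨x, hx, hsign⟩ := exists_forall_exists_mul_nonpos_of_odd hodd (half_pos hε)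
  refine (isMinOn_iff.1 hmin x hx).not_gt ((pi_norm_lt_iff hpos).2 fun i => ?_)
  obtain ⟨y, hy, hxy, hmul⟩ := hsign i
  calc ‖g x i‖ ≤ dist (g x i) (g y i) := by
        rw [Real.norm_eq_abs, Real.dist_eq]
        refine sq_le_sq.1 ?_
        nlinarith [sq_nonneg (g y i)]
    _ ≤ dist (g x) (g y) := dist_le_pi_dist _ _ i
    _ < ‖g x₀‖ := hunif x hx y hy (hxy.trans_lt (half_lt_self hε))

variable {E F : Type*} [NormedAddCommGroup E] [NormedSpace ℝ E] [NormedAddCommGroup F]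
  [NormedSpace ℝ F] [FiniteDimensional ℝ F]

theorem exists_eq_zero_of_odd (hrank : (Module.finrank ℝ F : Cardinal) < Module.rank ℝ E)
    {g : E → F} (hg : ContinuousOn g (sphere 0 1)) (hodd : ∀ x ∈ sphere 0 1, g (-x) = -g x) :
    ∃ x ∈ sphere 0 1, g x = 0 := by
  have hrank : ((Module.finrank ℝ F + 1 : ℕ) : Cardinal) ≤ Module.rank ℝ E := by
    rw [Nat.cast_succ]
    exact Cardinal.natCast_add_one_le_iff.2 hrank
  obtain ⟨L, hL⟩ := Module.le_rank_iff_exists_linearMap.1 hrank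
  let ι : (PiLp 1 fun _ : Fin (Module.finrank ℝ F + 1) => ℝ) →ₗ[ℝ] E :=
    L ∘ₗ (WithLp.linearEquiv 1 ℝ _).toLinearMap
  have hι : Function.Injective ι := hL.comp (WithLp.linearEquiv 1 ℝ _).injective
  let u : (PiLp 1 fun _ : Fin (Module.finrank ℝ F + 1) => ℝ) → E := fun x => ‖ι x‖⁻¹ • ι x
  let e : F ≃L[ℝ] (Fin (Module.finrank ℝ F) → ℝ) := ContinuousLinearEquiv.ofFinrankEq (by simp)
  have hne : ∀ x ∈ sphere 0 1, ‖ι x‖ ≠ 0 := fun x hx =>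
    norm_ne_zero_iff.2 ((map_ne_zero_iff ι hι).2 (ne_zero_of_mem_unit_sphere ⟨x, hx⟩))
  have hu : Set.MapsTo u (sphere 0 1) (sphere 0 1) := fun x hx => by
    simp [u, norm_smul, hne x hx]
  have hu_cont : ContinuousOn u (sphere 0 1) :=
    have hι_cont : Continuous ι := ι.continuous_of_finiteDimensional
    (hι_cont.norm.continuousOn.inv₀ hne).smul hι_cont.continuousOn
  obtain ⟨x, hx, hzero⟩ := exists_eq_zero_of_odd_piLp (g := fun x => e (g (u x)))
    (e.continuous.comp_continuousOn (hg.comp hu_cont hu)) fun x hx => by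
      have hu_neg : u (-x) = -u x := by simp [u]
      rw [hu_neg, hodd _ (hu hx), map_neg]
  exact ⟨u x, hu hx, e.map_eq_zero_iff.1 hzero⟩

end OddMaps

end BorsukUlam

theorem borsuk_ulam_general {E F : Type*} [NormedAddCommGroup E] [NormedSpace ℝ E]
    [NormedAddCommGroup F] [NormedSpace ℝ F] [FiniteDimensional ℝ F]
    (hrank : (Module.finrank ℝ F : Cardinal) < Module.rank ℝ E)
    (f : Metric.sphere (0 : E) 1 → F) (hf : Continuous f) :
    ∃ x : Metric.sphere (0 : E) 1, f x = f (-x) := by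
  obtain ⟨f', hf'⟩ := ContinuousMap.exists_extension
    Metric.isClosed_sphere.isClosedEmbedding_subtypeVal ⟨f, hf⟩
  have hext : ∀ x : Metric.sphere (0 : E) 1, f' x = f x := DFunLike.congr_fun hf'
  obtain ⟨x, hx, hzero⟩ := BorsukUlam.exists_eq_zero_of_odd hrank (g := fun x => f' x - f' (-x))
    (by fun_prop) fun x _ => by simp
  refine ⟨⟨x, hx⟩, ?_⟩
  rw [← hext, ← hext]
  exact sub_eq_zero.1 hzero

/-- Borsuk–Ulam theorem: every continuous map from the unit sphere `S^n ⊆ ℝ^{n+1}`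
to `ℝ^n` identifies some pair of antipodal points. -/
theorem borsuk_ulam (n : ℕ)
    (f : Metric.sphere (0 : EuclideanSpace ℝ (Fin (n + 1))) 1 → EuclideanSpace ℝ (Fin n))
    (hf : Continuous f) :
    ∃ x : Metric.sphere (0 : EuclideanSpace ℝ (Fin (n + 1))) 1, f x = f (-x) :=
  borsuk_ulam_general
    (by simp [rank_eq_card_basis (EuclideanSpace.basisFun (Fin (n + 1)) ℝ).toBasis]) f hf
end

section
/- Lusternik–Schnirelmann-type consequence: if S^n (n ≥ 1) is covered by n+1 closed sets F₀, …, F_n, then at least one F_i contains a pair of antipodal points x and −x. -/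
/-! Let `U₁, …, Uₙ` be open subsets of the sphere, each disjoint from its antipode, and choose
functions `sᵢ` on the sphere with values modulo two that change value at antipodes and equal one on
`Uᵢ`. The boundary of a cross-polytope consists of two antipodal halves, each a cone over such a
boundary of one dimension less; subdividing the halves and projecting them radially to the sphere
gives chains `cₖ` carried by small simplices with `∂cₖ₊₁ = cₖ + (-cₖ)`. Since
`⟨δs ⌣ φ, cₖ₊₁⟩ = ⟨s ⌣ φ, cₖ + (-cₖ)⟩ = ⟨φ, cₖ⟩` for every antipodally invariant cocycle `φ`, the
cocycle `δs₁ ⌣ ⋯ ⌣ δsₙ` takes the value one on `cₙ`. It vanishes on each simplex on which some `sᵢ`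
is constant, hence some small simplex lies in none of the sets `±Uᵢ`. By Lebesgue's number lemma
these sets do not cover the sphere. -/

open Finsupp

open scoped Pointwise

/-- Chains with coefficients modulo two on ordered simplices with vertices in `V`. A simplex is the
list of its vertices, possibly with repetitions; the empty list is the simplex of dimension `-1`, so
that the boundary operator below is the augmented one. -/
abbrev OrderedChain (V : Type*) := List V →₀ ZMod 2

namespace OrderedChain

section Boundary

variable {V W M : Type*} [AddCommGroup M] [Module (ZMod 2) M]

/-- The chains all of whose simplices belong to `G`. -/
noncomputable abbrev carriedBy (G : Set (List V)) : Submodule (ZMod 2) (OrderedChain V) :=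
  supported (ZMod 2) (ZMod 2) G

/-- The cone with apex `a`. -/
noncomputable def cone (a : V) : OrderedChain V →ₗ[ZMod 2] OrderedChain V :=
  lmapDomain (ZMod 2) (ZMod 2) (List.cons a)

/-- The chain map induced by a map on vertices. -/
noncomputable def map (f : V → W) : OrderedChain V →ₗ[ZMod 2] OrderedChain W :=
  lmapDomain (ZMod 2) (ZMod 2) (List.map f)

/-- The boundary of a simplex, the sum of its faces. -/
noncomputable def simplexBoundary : List V → OrderedChain V
  | [] => 0
  | a :: l => single l 1 + cone a (simplexBoundary l)

/-- The augmented boundary operator. -/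
noncomputable def boundary : OrderedChain V →ₗ[ZMod 2] OrderedChain V :=
  linearCombination (ZMod 2) simplexBoundary

@[simp] lemma cone_single (a : V) (l : List V) (r : ZMod 2) :
    cone a (single l r) = single (a :: l) r := by
  simp [cone]

@[simp] lemma map_single (f : V → W) (l : List V) (r : ZMod 2) :
    map f (single l r) = single (l.map f) r := by
  simp [map]

@[simp] lemma boundary_single (l : List V) : boundary (single l 1) = simplexBoundary l := by
  simp [boundary]

lemma linearMap_ext {f g : OrderedChain V →ₗ[ZMod 2] M}
    (h : ∀ l, f (single l 1) = g (single l 1)) : f = g :=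
  Finsupp.lhom_ext' fun l => LinearMap.ext_ring (h l)

lemma carriedBy_le {G : Set (List V)} {P : Submodule (ZMod 2) (OrderedChain V)}
    (h : ∀ l ∈ G, single l 1 ∈ P) : carriedBy G ≤ P := by
  rw [carriedBy, supported_eq_span_single, Submodule.span_le]
  rintro _ ⟨l, hl, rfl⟩
  exact h l hl

lemma apply_mem_of_mem_carriedBy {G : Set (List V)} {P : Submodule (ZMod 2) M}
    {f : OrderedChain V →ₗ[ZMod 2] M} (h : ∀ l ∈ G, f (single l 1) ∈ P) {c : OrderedChain V}
    (hc : c ∈ carriedBy G) : f c ∈ P :=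
  carriedBy_le (P := P.comap f) h hc

lemma eq_of_mem_carriedBy {G : Set (List V)} {f g : OrderedChain V →ₗ[ZMod 2] M}
    (h : ∀ l ∈ G, f (single l 1) = g (single l 1)) {c : OrderedChain V} (hc : c ∈ carriedBy G) :
    f c = g c :=
  carriedBy_le (P := LinearMap.eqLocus f g) h hc

lemma single_mem_carriedBy {G : Set (List V)} {l : List V} (hl : l ∈ G) :
    single l 1 ∈ carriedBy G :=
  single_mem_supported _ _ hl

lemma cone_mem_carriedBy {G H : Set (List V)} {a : V} (h : ∀ l ∈ G, a :: l ∈ H)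
    {c : OrderedChain V} (hc : c ∈ carriedBy G) : cone a c ∈ carriedBy H :=
  apply_mem_of_mem_carriedBy
    (fun l hl => by rw [cone_single]; exact single_mem_carriedBy (h l hl)) hc

lemma map_mem_carriedBy {G : Set (List V)} {H : Set (List W)} {f : V → W}
    (h : ∀ l ∈ G, l.map f ∈ H) {c : OrderedChain V} (hc : c ∈ carriedBy G) :
    map f c ∈ carriedBy H :=
  apply_mem_of_mem_carriedBy
    (fun l hl => by rw [map_single]; exact single_mem_carriedBy (h l hl)) hc

lemma simplexBoundary_mem_carriedBy (l : List V) :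
    simplexBoundary l ∈ carriedBy {t | t.length + 1 = l.length ∧ t ⊆ l} := by
  induction l with
  | nil => exact zero_mem _
  | cons a l ih =>
    refine add_mem (single_mem_carriedBy ⟨by simp, by simp⟩) (cone_mem_carriedBy ?_ ih)
    rintro t ⟨hlen, hsub⟩
    exact ⟨by simpa using hlen, List.cons_subset_cons a hsub⟩

lemma boundary_cone (a : V) (c : OrderedChain V) :
    boundary (cone a c) = c + cone a (boundary c) := by
  have : boundary ∘ₗ cone a = LinearMap.id + cone a ∘ₗ boundary :=
    linearMap_ext fun l => by simp [simplexBoundary]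
  exact LinearMap.congr_fun this c

lemma boundary_simplexBoundary (l : List V) : boundary (simplexBoundary l) = 0 := by
  induction l with
  | nil => simp [simplexBoundary]
  | cons a l ih => simp [simplexBoundary, boundary_cone, ih, ZModModule.add_self]

lemma boundary_boundary (c : OrderedChain V) : boundary (boundary c) = 0 := by
  have : boundary ∘ₗ boundary = (0 : OrderedChain V →ₗ[ZMod 2] OrderedChain V) :=
    linearMap_ext fun l => by simp [boundary_simplexBoundary]
  exact LinearMap.congr_fun this c

lemma map_cone (f : V → W) (a : V) (c : OrderedChain V) :
    map f (cone a c) = cone (f a) (map f c) := by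
  have : map f ∘ₗ cone a = cone (f a) ∘ₗ map f := linearMap_ext fun l => by simp
  exact LinearMap.congr_fun this c

lemma map_simplexBoundary (f : V → W) (l : List V) :
    map f (simplexBoundary l) = simplexBoundary (l.map f) := by
  induction l with
  | nil => simp [simplexBoundary]
  | cons a l ih => simp [simplexBoundary, map_cone, ih]

lemma boundary_map (f : V → W) (c : OrderedChain V) :
    boundary (map f c) = map f (boundary c) := by
  have : boundary ∘ₗ map f = map f ∘ₗ boundary :=
    linearMap_ext fun l => by simp [map_simplexBoundary]
  exact LinearMap.congr_fun this c

end Boundary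

section Cup

variable {V : Type*}

/-- The cup product `s ⌣ φ` of a function `s` on vertices with a cochain `φ`. -/
noncomputable def cup (s : V → ZMod 2) (φ : OrderedChain V →ₗ[ZMod 2] ZMod 2) :
    OrderedChain V →ₗ[ZMod 2] ZMod 2 :=
  linearCombination (ZMod 2) fun
    | [] => 0
    | x :: l => s x * φ (single (x :: l) 1)

/-- The cup product `δs₁ ⌣ ⋯ ⌣ δsₖ` of the coboundaries of functions on vertices. As `δδ = 0`, it
can be encoded recursively as `δ(s₁ ⌣ (δs₂ ⌣ ⋯ ⌣ δsₖ))`; the empty product is the coboundary of the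
augmentation, i.e. the cochain with value one on each vertex. -/
noncomputable def coboundaryProd : List (V → ZMod 2) → OrderedChain V →ₗ[ZMod 2] ZMod 2
  | [] => lapply [] ∘ₗ boundary
  | s :: S => cup s (coboundaryProd S) ∘ₗ boundary

@[simp] lemma cup_single_nil (s : V → ZMod 2) (φ : OrderedChain V →ₗ[ZMod 2] ZMod 2) :
    cup s φ (single [] 1) = 0 := by
  simp [cup]

@[simp] lemma cup_single_cons (s : V → ZMod 2) (φ : OrderedChain V →ₗ[ZMod 2] ZMod 2) (x : V)
    (l : List V) : cup s φ (single (x :: l) 1) = s x * φ (single (x :: l) 1) := by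
  simp [cup]

lemma coboundaryProd_cons_apply (s : V → ZMod 2) (S : List (V → ZMod 2)) (c : OrderedChain V) :
    coboundaryProd (s :: S) c = cup s (coboundaryProd S) (boundary c) :=
  rfl

@[simp] lemma coboundaryProd_single_nil (S : List (V → ZMod 2)) :
    coboundaryProd S (single [] 1) = 0 := by
  cases S <;> simp [coboundaryProd, simplexBoundary]

@[simp] lemma coboundaryProd_boundary (S : List (V → ZMod 2)) (c : OrderedChain V) :
    coboundaryProd S (boundary c) = 0 := by
  cases S <;> simp [coboundaryProd, boundary_boundary]

lemma coboundaryProd_single_eq_zero {S : List (V → ZMod 2)} {s : V → ZMod 2} (hs : s ∈ S)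
    {r : ZMod 2} {l : List V} (hl : ∀ x ∈ l, s x = r) : coboundaryProd S (single l 1) = 0 := by
  induction S generalizing l with
  | nil => simp at hs
  | cons t S ih =>
    rw [coboundaryProd_cons_apply, boundary_single]
    rcases List.mem_cons.1 hs with rfl | hs
    · have hcup : cup s (coboundaryProd S) (simplexBoundary l) =
          (r • coboundaryProd S) (simplexBoundary l) := by
        refine eq_of_mem_carriedBy (fun u hu => ?_) (simplexBoundary_mem_carriedBy l)
        cases u with
        | nil => simp
        | cons x u => simp [hl x (hu.2 List.mem_cons_self)]
      rw [hcup, LinearMap.smul_apply, ← boundary_single, coboundaryProd_boundary, smul_zero]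
    · refine eq_of_mem_carriedBy (g := 0) (fun u hu => ?_) (simplexBoundary_mem_carriedBy l)
      cases u with
      | nil => simp
      | cons x u => simp [ih hs fun y hy => hl y (hu.2 hy)]

variable {T : V → V}

lemma cup_add_map {s : V → ZMod 2} (hs : ∀ x, s (T x) = s x + 1)
    {φ : OrderedChain V →ₗ[ZMod 2] ZMod 2} (hφ : φ (single [] 1) = 0)
    (hφT : ∀ c, φ (map T c) = φ c) (c : OrderedChain V) : cup s φ (c + map T c) = φ c := by
  have : cup s φ ∘ₗ (LinearMap.id + map T) = φ := by
    refine linearMap_ext fun l => ?_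
    cases l with
    | nil => simp [hφ]
    | cons x l =>
      have hφl := hφT (single (x :: l) 1)
      simp only [map_single, List.map_cons] at hφl
      simp only [LinearMap.comp_apply, LinearMap.add_apply, LinearMap.id_apply, map_add,
        map_single, List.map_cons, cup_single_cons, hs, hφl]
      linear_combination CharTwo.add_self_eq_zero (s x * φ (single (x :: l) 1))
  exact LinearMap.congr_fun this c

lemma coboundaryProd_map {S : List (V → ZMod 2)} (hS : ∀ s ∈ S, ∀ x, s (T x) = s x + 1)
    (c : OrderedChain V) : coboundaryProd S (map T c) = coboundaryProd S c := by
  induction S generalizing c with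
  | nil =>
    have haug : lapply [] ∘ₗ map T = (lapply [] : OrderedChain V →ₗ[ZMod 2] ZMod 2) :=
      linearMap_ext fun l => by cases l <;> simp
    simpa [coboundaryProd, boundary_map] using LinearMap.congr_fun haug (boundary c)
  | cons s S ih =>
    rw [List.forall_mem_cons] at hS
    rw [← CharTwo.add_eq_zero, coboundaryProd_cons_apply, coboundaryProd_cons_apply, boundary_map,
      ← map_add, add_comm, cup_add_map hS.1 (coboundaryProd_single_nil S) (ih hS.2),
      coboundaryProd_boundary]

variable (T) in
/-- A chain that behaves, with respect to the involution `T`, like a hemisphere of a triangulated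
`k`-sphere: its boundary consists of a hemisphere of dimension `k - 1` and of its antipode. A
hemisphere of dimension zero has augmentation one. -/
def IsHemisphere : ℕ → OrderedChain V → Prop
  | 0, c => boundary c = single [] 1
  | k + 1, c => ∃ d, IsHemisphere k d ∧ boundary c = d + map T d

lemma IsHemisphere.coboundaryProd_eq_one {S : List (V → ZMod 2)}
    (hS : ∀ s ∈ S, ∀ x, s (T x) = s x + 1) {c : OrderedChain V} (hc : IsHemisphere T S.length c) :
    coboundaryProd S c = 1 := by
  induction S generalizing c with
  | nil =>
    have hc : boundary c = single [] 1 := hc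
    simp [coboundaryProd, hc]
  | cons s S ih =>
    rw [List.forall_mem_cons] at hS
    obtain ⟨d, hd, hcd⟩ := hc
    rw [coboundaryProd_cons_apply, hcd,
      cup_add_map hS.1 (coboundaryProd_single_nil S) (coboundaryProd_map hS.2), ih hS.2 hd]

end Cup

section Subdivision

variable {V : Type*} [AddCommGroup V] [Module ℝ V]

/-- The barycenter of the vertices of a simplex, with the junk value zero at the empty simplex. -/
noncomputable def barycenter (l : List V) : V := (l.length : ℝ)⁻¹ • l.sum

/-- The barycentric subdivision of chains of simplices with `k` vertices. Its value on simplices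
with a different number of vertices has no geometric meaning. -/
noncomputable def subdivide : ℕ → OrderedChain V →ₗ[ZMod 2] OrderedChain V
  | 0 => LinearMap.id
  | k + 1 => linearCombination (ZMod 2)
      fun l => cone (barycenter l) (subdivide k (simplexBoundary l))

@[simp] lemma subdivide_succ_single (k : ℕ) (l : List V) :
    subdivide (k + 1) (single l 1) = cone (barycenter l) (subdivide k (simplexBoundary l)) := by
  simp [subdivide]

lemma boundary_subdivide (k : ℕ) (c : OrderedChain V) :
    boundary (subdivide (k + 1) c) = subdivide k (boundary c) := by
  suffices h : boundary ∘ₗ subdivide (k + 1) =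
      (subdivide k ∘ₗ boundary : OrderedChain V →ₗ[ZMod 2] OrderedChain V) from
    LinearMap.congr_fun h c
  induction k with
  | zero =>
    exact linearMap_ext fun l => by simp [subdivide, boundary_cone, boundary_simplexBoundary]
  | succ k ih =>
    refine linearMap_ext fun l => ?_
    have hcycle := LinearMap.congr_fun ih (simplexBoundary l)
    simp only [LinearMap.comp_apply, boundary_simplexBoundary, map_zero] at hcycle
    simp [boundary_cone, hcycle]

lemma barycenter_map_neg (l : List V) : barycenter (l.map Neg.neg) = -barycenter l := by
  rw [barycenter, barycenter, List.length_map, ← smul_neg, List.sum_neg]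

lemma subdivide_map_neg (k : ℕ) (c : OrderedChain V) :
    subdivide k (map Neg.neg c) = map Neg.neg (subdivide k c) := by
  suffices h : subdivide k ∘ₗ map Neg.neg =
      (map Neg.neg ∘ₗ subdivide k : OrderedChain V →ₗ[ZMod 2] OrderedChain V) from
    LinearMap.congr_fun h c
  induction k with
  | zero => rfl
  | succ k ih =>
    refine linearMap_ext fun l => ?_
    have hface := LinearMap.congr_fun ih (simplexBoundary l)
    simp only [LinearMap.comp_apply, map_simplexBoundary] at hface
    simp [map_cone, barycenter_map_neg, hface]

lemma boundary_subdivide_iterate (k m : ℕ) (c : OrderedChain V) :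
    boundary ((subdivide (k + 1))^[m] c) = (subdivide k)^[m] (boundary c) :=
  Function.Semiconj.iterate_right (f := boundary) (boundary_subdivide k) m c

lemma subdivide_iterate_map_neg (k m : ℕ) (c : OrderedChain V) :
    (subdivide k)^[m] (map Neg.neg c) = map Neg.neg ((subdivide k)^[m] c) :=
  (Function.Semiconj.iterate_right (f := map Neg.neg)
    (fun c => (subdivide_map_neg k c).symm) m c).symm

end Subdivision

section Mesh

/-- The simplices with `k` vertices, all in `K` and at mutual distance at most `d`. -/
def smallSimplices {V : Type*} [PseudoMetricSpace V] (k : ℕ) (K : Set V) (d : ℝ) : Set (List V) :=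
  {l | l.length = k ∧ (∀ p ∈ l, p ∈ K) ∧ ∀ p ∈ l, ∀ q ∈ l, dist p q ≤ d}

variable {V : Type*} [SeminormedAddCommGroup V] [NormedSpace ℝ V]

lemma barycenter_mem_convexHull {l : List V} (hl : l ≠ []) :
    barycenter l ∈ convexHull ℝ {p | p ∈ l} := by
  have hpos : (0 : ℝ) < l.length := by exact_mod_cast List.length_pos_iff.2 hl
  have hsum : l.sum = ∑ i : Fin l.length, l[i] := by simp
  rw [barycenter, hsum, Finset.smul_sum]
  refine (convex_convexHull ℝ _).sum_mem (fun _ _ => by positivity) ?_ fun i _ =>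
    subset_convexHull ℝ _ (List.getElem_mem _)
  simp [hpos.ne']

lemma norm_length_smul_sub_sum_le {l : List V} {p : V} {d : ℝ} (hd : ∀ q ∈ l, dist p q ≤ d) :
    ‖(l.length : ℝ) • p - l.sum‖ ≤ l.length * d := by
  induction l with
  | nil => simp
  | cons a l ih =>
    rw [List.forall_mem_cons, dist_eq_norm] at hd
    calc ‖((a :: l).length : ℝ) • p - (a :: l).sum‖
        = ‖((l.length : ℝ) • p - l.sum) + (p - a)‖ := by
          congr 1
          simp only [List.length_cons, List.sum_cons, Nat.cast_succ, add_smul, one_smul]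
          abel
      _ ≤ l.length * d + d := (norm_add_le _ _).trans (add_le_add (ih hd.2) hd.1)
      _ = (a :: l).length * d := by simp only [List.length_cons, Nat.cast_succ]; ring

lemma dist_barycenter_le {l : List V} {d : ℝ} {p : V} (hp : p ∈ l)
    (hd : ∀ q ∈ l, dist p q ≤ d) : dist p (barycenter l) ≤ (1 - (l.length : ℝ)⁻¹) * d := by
  obtain ⟨l₁, l₂, rfl⟩ := List.append_of_mem hp
  have hrest := norm_length_smul_sub_sum_le (l := l₁ ++ l₂) fun q hq => hd q (by aesop)
  set k : ℝ := ((l₁ ++ l₂).length : ℝ) with hk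
  have hlen : ((l₁ ++ p :: l₂).length : ℝ) = k + 1 := by
    rw [hk, ← Nat.cast_succ, List.length_append, List.length_append, List.length_cons]
    rfl
  have hk0 : 0 ≤ k := by positivity
  have hsub : p - barycenter (l₁ ++ p :: l₂) = (k + 1)⁻¹ • (k • p - (l₁ ++ l₂).sum) := by
    have hsum : (l₁ ++ p :: l₂).sum = p + (l₁ ++ l₂).sum := by
      simp only [List.sum_append, List.sum_cons]
      abel
    have hp : p = (k + 1)⁻¹ • ((k + 1) • p) := by rw [inv_smul_smul₀ (by positivity)]
    rw [barycenter, hlen, hsum]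
    nth_rw 1 [hp]
    rw [← smul_sub, add_smul, one_smul, add_comm p, add_sub_add_right_eq_sub]
  rw [dist_eq_norm, hsub, norm_smul, Real.norm_of_nonneg (by positivity), hlen]
  calc (k + 1)⁻¹ * ‖k • p - (l₁ ++ l₂).sum‖ ≤ (k + 1)⁻¹ * (k * d) := by gcongr
    _ = (1 - (k + 1)⁻¹) * d := by field_simp; ring

lemma dist_barycenter_le_of_mem_convexHull {l : List V} {d : ℝ}
    (hd : ∀ p ∈ l, ∀ q ∈ l, dist p q ≤ d) {p : V} (hp : p ∈ convexHull ℝ {q | q ∈ l}) :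
    dist p (barycenter l) ≤ (1 - (l.length : ℝ)⁻¹) * d :=
  convexHull_min (t := Metric.closedBall (barycenter l) _)
    (fun q hq => dist_barycenter_le hq (hd q hq)) (convex_closedBall _ _) hp

lemma barycenter_cons_mem_smallSimplices {k : ℕ} {l t : List V} (hl : l ≠ []) {d r : ℝ}
    (hd : ∀ p ∈ l, ∀ q ∈ l, dist p q ≤ d) (hr : (1 - (l.length : ℝ)⁻¹) * d ≤ r)
    (ht : t ∈ smallSimplices k (convexHull ℝ {p | p ∈ l}) r) :
    barycenter l :: t ∈ smallSimplices (k + 1) (convexHull ℝ {p | p ∈ l}) r := by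
  obtain ⟨hlen, hmem, hsmall⟩ := ht
  have hbary := barycenter_mem_convexHull hl
  have hnear : ∀ p ∈ convexHull ℝ {p | p ∈ l}, dist p (barycenter l) ≤ r := fun p hp =>
    (dist_barycenter_le_of_mem_convexHull hd hp).trans hr
  refine ⟨by simp [hlen], List.forall_mem_cons.2 ⟨hbary, hmem⟩, ?_⟩
  simp only [List.forall_mem_cons]
  exact ⟨⟨hnear _ hbary, fun q hq => dist_comm q _ ▸ hnear q (hmem q hq)⟩,
    fun p hp => ⟨hnear p (hmem p hp), hsmall p hp⟩⟩

lemma subdivide_single_mem_carriedBy {N k : ℕ} (hk : k ≤ N) {K : Set V} (hK : Convex ℝ K) {d : ℝ}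
    {l : List V} (hl : l ∈ smallSimplices k K d) :
    subdivide k (single l 1) ∈ carriedBy (smallSimplices k K ((1 - (N : ℝ)⁻¹) * d)) := by
  induction k generalizing K l with
  | zero =>
    obtain rfl : l = [] := List.length_eq_zero_iff.1 hl.1
    exact single_mem_carriedBy ⟨rfl, by simp, by simp⟩
  | succ k ih =>
    obtain ⟨hlen, hlK, hld⟩ := hl
    have hne : l ≠ [] := by rintro rfl; simp at hlen
    have hd : 0 ≤ d := by
      obtain ⟨p, hp⟩ := List.exists_mem_of_ne_nil l hne
      exact dist_nonneg.trans (hld p hp p hp)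
    have hr : (1 - (l.length : ℝ)⁻¹) * d ≤ (1 - (N : ℝ)⁻¹) * d := by
      rw [hlen]
      gcongr
    have hfaces : subdivide k (simplexBoundary l) ∈
        carriedBy (smallSimplices k (convexHull ℝ {p | p ∈ l}) ((1 - (N : ℝ)⁻¹) * d)) := by
      refine apply_mem_of_mem_carriedBy (fun t ht => ?_) (simplexBoundary_mem_carriedBy l)
      exact ih (by omega) (convex_convexHull ℝ _) ⟨by have := ht.1; omega,
        fun p hp => subset_convexHull ℝ _ (ht.2 hp),
        fun p hp q hq => hld _ (ht.2 hp) _ (ht.2 hq)⟩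
    rw [subdivide_succ_single]
    refine cone_mem_carriedBy (fun t ht => ?_) hfaces
    obtain ⟨hlen', hmem, hsmall⟩ := barycenter_cons_mem_smallSimplices hne hld hr ht
    exact ⟨hlen', fun p hp => convexHull_min hlK hK (hmem p hp), hsmall⟩

lemma subdivide_iterate_mem_carriedBy {k : ℕ} {ι : Type*} {K : ι → Set V}
    (hK : ∀ i, Convex ℝ (K i)) {d : ℝ} {c : OrderedChain V}
    (hc : c ∈ carriedBy (⋃ i, smallSimplices k (K i) d)) (m : ℕ) :
    (subdivide k)^[m] c ∈
      carriedBy (⋃ i, smallSimplices k (K i) ((1 - (k : ℝ)⁻¹) ^ m * d)) := by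
  induction m with
  | zero => simpa using hc
  | succ m ih =>
    rw [Function.iterate_succ_apply', pow_succ', mul_assoc]
    refine apply_mem_of_mem_carriedBy (fun l hl => ?_) ih
    obtain ⟨i, hi⟩ := Set.mem_iUnion.1 hl
    exact supported_mono (Set.subset_iUnion_of_subset i subset_rfl)
      (subdivide_single_mem_carriedBy le_rfl (hK i) hi)

lemma exists_subdivide_iterate_mem_carriedBy {k : ℕ} {c : OrderedChain V}
    (hc : c ∈ carriedBy {l | l.length = k}) :
    ∃ d : ℝ, ∀ m, (subdivide k)^[m] c ∈ carriedBy
      (⋃ l : c.support, smallSimplices k (convexHull ℝ {p | p ∈ l.1})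
        ((1 - (k : ℝ)⁻¹) ^ m * d)) := by
  have hfin : (⋃ l ∈ c.support, {p | p ∈ l}).Finite :=
    c.support.finite_toSet.biUnion fun l _ => l.finite_toSet
  obtain ⟨d, hd⟩ := Metric.isBounded_iff.1 hfin.isBounded
  refine ⟨d, subdivide_iterate_mem_carriedBy (fun _ => convex_convexHull ℝ _) ?_⟩
  refine (mem_supported _ _).2 fun l hl => Set.mem_iUnion.2 ⟨⟨l, hl⟩, hc hl,
    fun p hp => subset_convexHull ℝ _ hp, fun p hp q hq => hd ?_ ?_⟩
  · exact Set.mem_biUnion hl hp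
  · exact Set.mem_biUnion hl hq

end Mesh

section CrossPolytope

/-- The boundary of the cross-polytope with vertices `±a`, for `a` in the list. -/
noncomputable def crossPolytope {V : Type*} [Neg V] : List V → OrderedChain V
  | [] => single [] 1
  | a :: L => cone a (crossPolytope L) + cone (-a) (crossPolytope L)

lemma boundary_crossPolytope {V : Type*} [Neg V] (L : List V) : boundary (crossPolytope L) = 0 := by
  induction L with
  | nil => simp [crossPolytope, simplexBoundary]
  | cons a L ih => simp [crossPolytope, boundary_cone, ih, ZModModule.add_self]

/-- The facets of the cross-polytope with vertices `±a`, for `a` in the list. -/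
def crossPolytopeFacets {V : Type*} [Neg V] (L : List V) : Set (List V) :=
  {l | List.Forall₂ (fun p a => p = a ∨ p = -a) l L}

lemma cone_crossPolytope_mem_carriedBy {V : Type*} [Neg V] (a : V) (L : List V) :
    cone a (crossPolytope L) ∈ carriedBy (crossPolytopeFacets (a :: L)) := by
  suffices h : crossPolytope L ∈ carriedBy (crossPolytopeFacets L) from
    cone_mem_carriedBy (fun l hl => .cons (.inl rfl) hl) h
  induction L with
  | nil => exact single_mem_carriedBy .nil
  | cons a L ih =>
    exact add_mem (cone_mem_carriedBy (fun l hl => .cons (.inl rfl) hl) ih)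
      (cone_mem_carriedBy (fun l hl => .cons (.inr rfl) hl) ih)

lemma map_neg_crossPolytope {V : Type*} [InvolutiveNeg V] (L : List V) :
    map Neg.neg (crossPolytope L) = crossPolytope L := by
  induction L with
  | nil => simp [crossPolytope]
  | cons a L ih => simp [crossPolytope, map_cone, ih, add_comm]

lemma crossPolytope_cons {V : Type*} [InvolutiveNeg V] (a : V) (L : List V) :
    crossPolytope (a :: L) =
      cone a (crossPolytope L) + map Neg.neg (cone a (crossPolytope L)) := by
  rw [map_cone, map_neg_crossPolytope, crossPolytope]

variable {V : Type*} [SeminormedAddCommGroup V] [NormedSpace ℝ V]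

lemma subdivide_iterate_cone_crossPolytope_mem_carriedBy {a : V} {L : List V}
    (h0 : ∀ l ∈ crossPolytopeFacets (a :: L), (0 : V) ∉ convexHull ℝ {p | p ∈ l}) (m : ℕ) :
    (subdivide (L.length + 1))^[m] (cone a (crossPolytope L)) ∈
      carriedBy {l | ∀ p ∈ l, p ≠ 0} := by
  have hfacets := cone_crossPolytope_mem_carriedBy a L
  obtain ⟨d, hd⟩ := exists_subdivide_iterate_mem_carriedBy
    (supported_mono (fun l hl => hl.length_eq) hfacets)
  refine supported_mono (Set.iUnion_subset ?_) (hd m)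
  rintro ⟨l, hl⟩ t ht p hp rfl
  exact h0 l (hfacets hl) (ht.2.1 0 hp)

lemma isHemisphere_map_subdivide_iterate {X : Type*} [Neg X] {g : V → X}
    (hg : ∀ x ≠ 0, g (-x) = -g x) (m : ℕ) {a : V} {L : List V}
    (h0 : ∀ l ∈ crossPolytopeFacets (a :: L), (0 : V) ∉ convexHull ℝ {p | p ∈ l}) :
    IsHemisphere Neg.neg L.length
      (map g ((subdivide (L.length + 1))^[m] (cone a (crossPolytope L)))) := by
  induction L generalizing a with
  | nil =>
    rw [List.length_nil, IsHemisphere, boundary_map, boundary_subdivide_iterate, boundary_cone]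
    simp [crossPolytope, simplexBoundary, subdivide]
  | cons b L ih =>
    have h0' : ∀ l ∈ crossPolytopeFacets (b :: L), (0 : V) ∉ convexHull ℝ {p | p ∈ l} :=
      fun l hl h => h0 (a :: l) (.cons (.inl rfl) hl)
        (convexHull_mono (fun p hp => List.mem_cons_of_mem a hp) h)
    refine ⟨_, ih h0', ?_⟩
    rw [boundary_map, List.length_cons, boundary_subdivide_iterate, boundary_cone,
      boundary_crossPolytope, map_zero, add_zero, crossPolytope_cons, iterate_map_add,
      subdivide_iterate_map_neg, map_add, add_right_inj]
    refine eq_of_mem_carriedBy (f := map g ∘ₗ map Neg.neg) (g := map Neg.neg ∘ₗ map g)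
      (fun l hl => ?_) (subdivide_iterate_cone_crossPolytope_mem_carriedBy h0' m)
    have : l.map (g ∘ Neg.neg) = l.map (Neg.neg ∘ g) :=
      List.map_congr_left fun p hp => hg p (hl p hp)
    simp [this]

lemma exists_subdivide_iterate_subordinate {k : ℕ} {c : OrderedChain V}
    (hc : c ∈ carriedBy {l | l.length = k + 1}) {ι : Type*} {U : ι → Set V}
    (hU : ∀ i, IsOpen (U i)) (hcover : ∀ l ∈ c.support, convexHull ℝ {p | p ∈ l} ⊆ ⋃ i, U i) :
    ∃ m, (subdivide (k + 1))^[m] c ∈ carriedBy {l | ∃ i, ∀ p ∈ l, p ∈ U i} := by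
  have hK : IsCompact (⋃ l ∈ c.support, convexHull ℝ {p | p ∈ l}) :=
    c.support.isCompact_biUnion fun l _ => l.finite_toSet.isCompact_convexHull ℝ
  obtain ⟨δ, hδ, hball⟩ := lebesgue_number_lemma_of_metric hK hU (Set.iUnion₂_subset hcover)
  obtain ⟨d, hd⟩ := exists_subdivide_iterate_mem_carriedBy hc
  obtain ⟨m, hm⟩ : ∃ m : ℕ, (1 - ((k + 1 : ℕ) : ℝ)⁻¹) ^ m * d < δ := by
    have hr0 : 0 ≤ 1 - ((k + 1 : ℕ) : ℝ)⁻¹ := sub_nonneg.2 (Nat.cast_inv_le_one _)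
    have hr1 : 1 - ((k + 1 : ℕ) : ℝ)⁻¹ < 1 := sub_lt_self 1 (by positivity)
    have hlim := (tendsto_pow_atTop_nhds_zero_of_lt_one hr0 hr1).mul_const d
    rw [zero_mul] at hlim
    exact (hlim.eventually_lt_const hδ).exists
  refine ⟨m, supported_mono (Set.iUnion_subset ?_) (hd m)⟩
  rintro ⟨l, hl⟩ t ⟨hlen, hmem, hsmall⟩
  obtain ⟨p, hp⟩ := List.exists_mem_of_length_pos (l := t) (by omega)
  obtain ⟨i, hi⟩ := hball p (Set.mem_biUnion hl (hmem p hp))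
  exact ⟨i, fun q hq => hi ((hsmall q hq p hp).trans_lt hm)⟩

end CrossPolytope

end OrderedChain

section Sphere

lemma zero_notMem_convexHull_range {V ι : Type*} [AddCommGroup V] [Module ℝ V] {v : ι → V}
    (hv : LinearIndependent ℝ v) : (0 : V) ∉ convexHull ℝ (Set.range v) := by
  rw [convexHull_range_eq_exists_affineCombination]
  rintro ⟨s, w, -, hw, h⟩
  rw [s.affineCombination_eq_linear_combination v w hw] at h
  rw [Finset.sum_eq_zero (linearIndependent_iff'.1 hv s w h)] at hw
  exact zero_ne_one hw

lemma zero_notMem_convexHull_of_mem_crossPolytopeFacets {V : Type*} [AddCommGroup V] [Module ℝ V]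
    {n : ℕ} {v : Fin n → V} (hv : LinearIndependent ℝ v) {l : List V}
    (hl : l ∈ OrderedChain.crossPolytopeFacets (List.ofFn v)) :
    (0 : V) ∉ convexHull ℝ {p | p ∈ l} := by
  obtain ⟨w, rfl⟩ : ∃ w : Fin n → V, l = List.ofFn w := by
    obtain rfl : l.length = n := by simpa using hl.length_eq
    exact ⟨l.get, (List.ofFn_get l).symm⟩
  have hsign : ∀ i, ∃ ε : ℝˣ, ε • v i = w i := fun i => by
    have hi : w i = v i ∨ w i = -v i := by
      simpa using hl.get (i := i) (by simp) (by simp)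
    rcases hi with h | h
    · exact ⟨1, by simp [h]⟩
    · exact ⟨-1, by simp [h]⟩
  choose ε hε using hsign
  have hw : LinearIndependent ℝ w := funext hε ▸ hv.units_smul ε
  simpa [List.mem_ofFn', Set.range] using zero_notMem_convexHull_range hw

lemma exists_radialProjection (V : Type*) [NormedAddCommGroup V] [NormedSpace ℝ V]
    [Nontrivial V] : ∃ g : V → Metric.sphere (0 : V) 1,
      ContinuousOn g {0}ᶜ ∧ ∀ x ≠ 0, g (-x) = -g x := by
  classical
  obtain ⟨x₀, hx₀⟩ := NormedSpace.sphere_nonempty (x := (0 : V)) (r := 1) |>.2 zero_le_one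
  have hmem : ∀ x : V, x ≠ 0 → ‖x‖⁻¹ • x ∈ Metric.sphere (0 : V) 1 := fun x hx => by
    simpa using norm_smul_inv_norm (𝕜 := ℝ) hx
  refine ⟨fun x => if hx : x = 0 then ⟨x₀, hx₀⟩ else ⟨‖x‖⁻¹ • x, hmem x hx⟩, ?_, fun x hx => ?_⟩
  · rw [continuousOn_iff_continuous_domRestrict, Topology.IsInducing.subtypeVal.continuous_iff]
    have : Continuous fun x : ({0}ᶜ : Set V) => ‖x.1‖⁻¹ • x.1 :=
      (continuous_subtype_val.norm.inv₀ fun x => norm_ne_zero_iff.2 x.2).smul continuous_subtype_val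
    refine this.congr fun x => ?_
    have hx : x.1 ≠ 0 := x.2
    simp [hx]
  · ext
    simp [hx]

open OrderedChain

lemma exists_isHemisphere_subordinate {V X : Type*} [NormedAddCommGroup V] [NormedSpace ℝ V]
    [TopologicalSpace X] [Neg X] {g : V → X} (hg : ContinuousOn g {0}ᶜ)
    (hneg : ∀ x ≠ 0, g (-x) = -g x) {n : ℕ} (hV : n < Module.rank ℝ V) {ι : Type*}
    {U : ι → Set X} (hU : ∀ i, IsOpen (U i)) (hcover : ⋃ i, U i = Set.univ) :
    ∃ c, IsHemisphere Neg.neg n c ∧ c ∈ carriedBy {l | ∃ i, ∀ p ∈ l, p ∈ U i} := by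
  obtain ⟨v, hv⟩ := Module.le_rank_iff.1 (show ((n + 1 : ℕ) : Cardinal) ≤ Module.rank ℝ V by
    exact_mod_cast Order.succ_le_of_lt hV)
  obtain ⟨a, L, hL⟩ : ∃ a L, List.ofFn v = a :: L := ⟨_, _, List.ofFn_succ⟩
  obtain rfl : L.length = n := by simpa using (congr_arg List.length hL).symm
  have hfacets := cone_crossPolytope_mem_carriedBy a L
  have h0 : ∀ l ∈ crossPolytopeFacets (a :: L), (0 : V) ∉ convexHull ℝ {p | p ∈ l} :=
    fun l hl => zero_notMem_convexHull_of_mem_crossPolytopeFacets hv (hL ▸ hl)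
  obtain ⟨m, hm⟩ := exists_subdivide_iterate_subordinate
    (supported_mono (fun l hl => hl.length_eq) hfacets)
    (fun i => hg.isOpen_inter_preimage isOpen_compl_singleton (hU i)) fun l hl x hx => by
      rw [← Set.inter_iUnion, ← Set.preimage_iUnion, hcover, Set.preimage_univ, Set.inter_univ]
      rintro rfl
      exact h0 l (hfacets hl) hx
  refine ⟨_, isHemisphere_map_subdivide_iterate hneg m h0, map_mem_carriedBy ?_ hm⟩
  rintro l ⟨i, hi⟩
  exact ⟨i, List.forall_mem_map.2 fun p hp => (hi p hp).2⟩

lemma exists_antisymmetric_extension {X : Type*} [InvolutiveNeg X] (hfree : ∀ x : X, -x ≠ x)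
    {P : Set X} (hP : Disjoint P (-P)) :
    ∃ s : X → ZMod 2, (∀ x, s (-x) = s x + 1) ∧ ∀ x ∈ P, s x = 1 := by
  classical
  have h11 : (1 : ZMod 2) + 1 = 0 := CharTwo.add_self_eq_zero 1
  refine ⟨fun x => if x ∈ P ∨ (-x ∉ P ∧ WellOrderingRel x (-x)) then 1 else 0, fun x => ?_,
    fun x hx => if_pos (.inl hx)⟩
  by_cases hx : x ∈ P
  · have hnx : -x ∉ P := Set.disjoint_left.1 hP hx
    simp [hx, hnx, h11]
  by_cases hnx : -x ∈ P
  · simp [hx, hnx]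
  rcases trichotomous_of WellOrderingRel x (-x) with h | h | h
  · simp [hx, hnx, h, asymm_of WellOrderingRel h, h11]
  · exact absurd h.symm (hfree x)
  · simp [hx, hnx, h, asymm_of WellOrderingRel h]

lemma exists_forall_notMem_of_isOpen {V : Type*} [NormedAddCommGroup V] [NormedSpace ℝ V] {n : ℕ}
    (hV : n < Module.rank ℝ V) {U : Fin n → Set (Metric.sphere (0 : V) 1)}
    (hU : ∀ i, IsOpen (U i)) (hdisj : ∀ i, Disjoint (U i) (-U i)) :
    ∃ x, ∀ i, x ∉ U i ∧ -x ∉ U i := by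
  by_contra! hmem
  have : Nontrivial V := rank_pos_iff_nontrivial.1 (bot_le.trans_lt hV)
  obtain ⟨g, hg, hneg⟩ := exists_radialProjection V
  have hfree : ∀ x : Metric.sphere (0 : V) 1, -x ≠ x := fun x =>
    (ne_neg_of_mem_unit_sphere ℝ x).symm
  choose s hanti hone using fun i => exists_antisymmetric_extension hfree (hdisj i)
  have hopen : ∀ i : Fin n × Bool, IsOpen (bif i.2 then U i.1 else -U i.1) := by
    rintro ⟨i, _ | _⟩
    exacts [(hU i).preimage continuous_neg, hU i]
  have hcover : ⋃ i : Fin n × Bool, (bif i.2 then U i.1 else -U i.1) = Set.univ := by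
    refine Set.iUnion_eq_univ_iff.2 fun x => ?_
    obtain ⟨i, hi⟩ := hmem x
    by_cases hx : x ∈ U i
    exacts [⟨(i, true), hx⟩, ⟨(i, false), hi hx⟩]
  obtain ⟨c, hc, hsmall⟩ := exists_isHemisphere_subordinate hg hneg hV (ι := Fin n × Bool)
    (U := fun i => bif i.2 then U i.1 else -U i.1) hopen hcover
  have hS : ∀ t ∈ List.ofFn s, ∀ x, t (-x) = t x + 1 := by
    simpa [List.forall_mem_ofFn_iff] using hanti
  have hcount : coboundaryProd (List.ofFn s) c = 1 :=
    IsHemisphere.coboundaryProd_eq_one hS (by rwa [List.length_ofFn])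
  have hvanish : coboundaryProd (List.ofFn s) c = 0 := by
    refine eq_of_mem_carriedBy (g := 0) (fun l hl => ?_) hsmall
    obtain ⟨⟨i, _ | _⟩, hl⟩ := hl
    · refine coboundaryProd_single_eq_zero (r := 0) (List.mem_ofFn.2 ⟨i, rfl⟩) fun x hx => ?_
      simpa [hanti] using hone i (-x) (hl x hx)
    · exact coboundaryProd_single_eq_zero (List.mem_ofFn.2 ⟨i, rfl⟩) fun x hx => hone i x (hl x hx)
  exact zero_ne_one (hvanish.symm.trans hcount)

lemma exists_isOpen_superset_disjoint_neg {X : Type*} [TopologicalSpace X] [NormalSpace X]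
    [InvolutiveNeg X] [ContinuousNeg X] {F : Set X} (hF : IsClosed F) (hdisj : Disjoint F (-F)) :
    ∃ U, IsOpen U ∧ F ⊆ U ∧ Disjoint U (-U) := by
  obtain ⟨P, Q, hP, hQ, hFP, hFQ, hPQ⟩ := normal_separation hF (hF.preimage continuous_neg) hdisj
  refine ⟨P ∩ -Q, hP.inter (hQ.preimage continuous_neg),
    Set.subset_inter hFP fun x hx => hFQ (Set.neg_mem_neg.2 hx), ?_⟩
  rw [Set.inter_neg, neg_neg]
  exact hPQ.mono Set.inter_subset_left Set.inter_subset_right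

theorem lusternik_schnirelmann_general {V : Type*} [NormedAddCommGroup V] [NormedSpace ℝ V]
    {n : ℕ} (hV : n < Module.rank ℝ V) (F : Fin (n + 1) → Set (Metric.sphere (0 : V) 1))
    (hF : ∀ i : Fin n, IsOpen (F i.castSucc) ∨ IsClosed (F i.castSucc))
    (hcover : (⋃ i, F i) = Set.univ) :
    ∃ i, ∃ x : Metric.sphere (0 : V) 1, x ∈ F i ∧ -x ∈ F i := by
  by_contra! hno
  have hdisj : ∀ i, Disjoint (F i) (-F i) := fun i => Set.disjoint_left.2 (hno i)
  have henlarge : ∀ i : Fin n, ∃ U, IsOpen U ∧ F i.castSucc ⊆ U ∧ Disjoint U (-U) := fun i =>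
    (hF i).elim (fun h => ⟨_, h, subset_rfl, hdisj _⟩)
      (exists_isOpen_superset_disjoint_neg · (hdisj _))
  choose U hU hFU hUdisj using henlarge
  obtain ⟨x, hx⟩ := exists_forall_notMem_of_isOpen hV hU hUdisj
  have hlast : ∀ y, (∀ i, y ∉ U i) → y ∈ F (Fin.last n) := fun y hy => by
    obtain ⟨i, hi⟩ := Set.mem_iUnion.1 (hcover ▸ Set.mem_univ y)
    induction i using Fin.lastCases with
    | last => exact hi
    | cast i => exact absurd (hFU i hi) (hy i)
  exact hno _ x (hlast x fun i => (hx i).1) (hlast (-x) fun i => (hx i).2)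

end Sphere

/-- Lusternik–Schnirelmann: if `S^n` is covered by `n+1` closed sets, one of
them contains a pair of antipodal points. -/
theorem lusternik_schnirelmann (n : ℕ) (hn : 1 ≤ n)
    (F : Fin (n + 1) → Set (Metric.sphere (0 : EuclideanSpace ℝ (Fin (n + 1))) 1))
    (hclosed : ∀ i, IsClosed (F i))
    (hcover : (⋃ i, F i) = Set.univ) :
    ∃ i, ∃ x : Metric.sphere (0 : EuclideanSpace ℝ (Fin (n + 1))) 1,
      x ∈ F i ∧ -x ∈ F i := by
  refine lusternik_schnirelmann_general ?_ F (fun i => .inr (hclosed _)) hcover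
  simp [rank_eq_card_basis (EuclideanSpace.basisFun (Fin (n + 1)) ℝ).toBasis]
end

section
/- If f : S^n → ℝ^n is continuous, then the 'antipodal difference' map F(x) = f(x) − f(−x) has a zero; equivalently, every continuous odd map from S^n to ℝ^n has a zero. -/
/-!
The signs of odd real functions `g₁, …, gₙ` are cochains `s₁, …, sₙ` with values in `ZMod 2` and
`sᵢ(-x) = sᵢ(x) + 1`. The cup product `δs₁ ⌣ ⋯ ⌣ δsₙ` takes the value `1` on every iterated
barycentric subdivision of a hemisphere of the cross-polytope: it is the coboundary of
`s₁ ⌣ δs₂ ⌣ ⋯ ⌣ δsₙ`, the boundary of the hemisphere is the sum of a lower-dimensional hemisphere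
and its antipode, and oddness turns the values of the primitive on these two into the value of
`δs₂ ⌣ ⋯ ⌣ δsₙ` on the smaller hemisphere. Hence there are arbitrarily small simplices on which
every `gᵢ` changes sign, and compactness produces a common zero.
-/

open Finsupp Metric

/-- Mod 2 chains of ordered tuples of points. A `k`-tuple is a possibly degenerate
`(k - 1)`-simplex, and the empty tuple carries the augmentation. -/
abbrev TupleChain (V : Type*) : Type _ := List V →₀ ZMod 2

namespace TupleChain

section Complex

variable {V : Type*}

theorem hom_ext {M : Type*} [AddCommGroup M] [Module (ZMod 2) M] {f g : TupleChain V →ₗ[ZMod 2] M}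
    (h : ∀ l, f (single l 1) = g (single l 1)) : f = g :=
  lhom_ext' fun l => LinearMap.ext_ring (h l)

theorem map_mem_of_mem_supported {M : Type*} [AddCommGroup M] [Module (ZMod 2) M]
    {f : TupleChain V →ₗ[ZMod 2] M} {P : Submodule (ZMod 2) M} {S : Set (List V)}
    (h : ∀ l ∈ S, f (single l 1) ∈ P) {c : TupleChain V}
    (hc : c ∈ supported (ZMod 2) (ZMod 2) S) : f c ∈ P := by
  rw [supported_eq_span_single] at hc
  exact Submodule.span_le (p := P.comap f).mpr (Set.forall_mem_image.mpr h) hc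

/-- The pairing of a cochain, given as a function on tuples, with chains. -/
noncomputable def eval (φ : List V → ZMod 2) : TupleChain V →ₗ[ZMod 2] ZMod 2 :=
  linearCombination (ZMod 2) φ

@[simp]
theorem eval_single (φ : List V → ZMod 2) (l : List V) : eval φ (single l 1) = φ l := by
  simp [eval]

theorem exists_mem_ne_zero_of_eval_ne_zero {φ : List V → ZMod 2} {S : Set (List V)}
    {c : TupleChain V} (hc : c ∈ supported (ZMod 2) (ZMod 2) S) (h : eval φ c ≠ 0) :
    ∃ l ∈ S, φ l ≠ 0 := by
  by_contra! hφ
  exact h (map_mem_of_mem_supported (P := ⊥) (by simpa using hφ) hc)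

/-- The cone operator, which prepends the vertex `a` to every tuple. -/
noncomputable def cone (a : V) : TupleChain V →ₗ[ZMod 2] TupleChain V :=
  lmapDomain (ZMod 2) (ZMod 2) (List.cons a)

@[simp]
theorem cone_single (a : V) (l : List V) : cone a (single l 1) = single (a :: l) 1 :=
  mapDomain_single

theorem eval_cone (φ : List V → ZMod 2) (a : V) (c : TupleChain V) :
    eval φ (cone a c) = eval (fun l => φ (a :: l)) c :=
  linearCombination_mapDomain _ _ _

/-- The sum of the faces of a tuple, obtained by deleting one entry. -/
noncomputable def faces : List V → TupleChain V
  | [] => 0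
  | a :: l => single l 1 + cone a (faces l)

/-- The boundary operator of the augmented complex of tuples. -/
noncomputable def boundary : TupleChain V →ₗ[ZMod 2] TupleChain V :=
  linearCombination (ZMod 2) faces

@[simp]
theorem boundary_single (l : List V) : boundary (single l 1) = faces l := by
  simp [boundary]

theorem boundary_cone (a : V) (c : TupleChain V) :
    boundary (cone a c) = c + cone a (boundary c) := by
  suffices boundary ∘ₗ cone a = .id + cone a ∘ₗ boundary from LinearMap.congr_fun this c
  exact hom_ext fun l => by simp [faces]

theorem boundary_faces (l : List V) : boundary (faces l) = 0 := by
  induction l with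
  | nil => exact map_zero _
  | cons a l ih =>
    rw [faces, map_add, boundary_single, boundary_cone, ih, map_zero, add_zero,
      ZModModule.add_self]

theorem faces_mem_supported (l : List V) :
    faces l ∈ supported (ZMod 2) (ZMod 2) {m | m.length + 1 = l.length ∧ m ⊆ l} := by
  induction l with
  | nil => exact zero_mem _
  | cons a l ih =>
    refine add_mem (single_mem_supported _ _ ⟨rfl, List.subset_cons_self a l⟩)
      (map_mem_of_mem_supported (fun m hm => ?_) ih)
    rw [cone_single]
    exact single_mem_supported _ _ ⟨congrArg (· + 1) hm.1, List.cons_subset_cons a hm.2⟩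

/-- The chain map induced by the antipodal map. -/
noncomputable def antipode [Neg V] : TupleChain V →ₗ[ZMod 2] TupleChain V :=
  lmapDomain (ZMod 2) (ZMod 2) (List.map (-·))

@[simp]
theorem antipode_single [Neg V] (l : List V) :
    antipode (single l 1) = single (l.map (-·)) 1 :=
  mapDomain_single

theorem antipode_cone [Neg V] (a : V) (c : TupleChain V) :
    antipode (cone a c) = cone (-a) (antipode c) := by
  suffices antipode ∘ₗ cone a = cone (-a) ∘ₗ antipode from LinearMap.congr_fun this c
  exact hom_ext fun l => by simp

theorem antipode_faces [Neg V] (l : List V) : antipode (faces l) = faces (l.map (-·)) := by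
  induction l with
  | nil => exact map_zero _
  | cons a l ih => rw [faces, map_add, antipode_single, antipode_cone, ih, List.map_cons, faces]

end Complex

section Cup

variable {V : Type*} {n : ℕ}

/-- The cup product `δs₀ ⌣ ⋯ ⌣ δsₙ₋₁` of the coboundaries of the `0`-cochains `sᵢ`, a cochain on
`(n + 1)`-tuples extended by zero to tuples of any other length. -/
def coboundaryCup : {n : ℕ} → (Fin n → V → ZMod 2) → List V → ZMod 2
  | 0, _, [_] => 1
  | _ + 1, s, x :: y :: l => (s 0 x + s 0 y) * coboundaryCup (Fin.tail s) (y :: l)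
  | _, _, _ => 0

/-- The cup product `f ⌣ δs₀ ⌣ ⋯ ⌣ δsₙ₋₁`, a primitive of `δf ⌣ δs₀ ⌣ ⋯ ⌣ δsₙ₋₁`. -/
def vertexCup (f : V → ZMod 2) (s : Fin n → V → ZMod 2) : List V → ZMod 2
  | [] => 0
  | x :: l => f x * coboundaryCup s (x :: l)

@[simp]
theorem coboundaryCup_nil (s : Fin n → V → ZMod 2) : coboundaryCup s [] = 0 := by
  cases n <;> rfl

theorem eval_coboundaryCup_zero_faces (s : Fin 0 → V → ZMod 2) (l : List V) :
    eval (coboundaryCup s) (faces l) = 0 := by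
  match l with
  | [] => exact map_zero _
  | [x] => simp [faces]
  | x :: y :: l =>
    have hcone (c : TupleChain V) : eval (fun m => coboundaryCup s (x :: y :: m)) c = 0 := by
      simp [coboundaryCup, eval, linearCombination_apply]
    have hhead : coboundaryCup s (x :: l) = coboundaryCup s (y :: l) := by cases l <;> rfl
    simp only [faces, map_add, eval_single, cone_single, eval_cone, hcone, hhead, add_zero]
    exact CharTwo.add_self_eq_zero _

theorem eval_vertexCup_cone (f : V → ZMod 2) (s : Fin n → V → ZMod 2) (x : V)
    (c : TupleChain V) :
    eval (vertexCup f s) (cone x c) = f x * eval (coboundaryCup s) (cone x c) := by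
  suffices eval (vertexCup f s) ∘ₗ cone x = f x • (eval (coboundaryCup s) ∘ₗ cone x) from
    LinearMap.congr_fun this c
  exact hom_ext fun l => by simp [vertexCup]

theorem eval_vertexCup_faces (f : V → ZMod 2) {s : Fin n → V → ZMod 2}
    (hs : ∀ l, eval (coboundaryCup s) (faces l) = 0) (l : List V) :
    eval (vertexCup f s) (faces l) = eval (coboundaryCup (Fin.cons f s)) (single l 1) := by
  match l with
  | [] => simp [faces]
  | [x] => simp [faces, vertexCup, coboundaryCup]
  | x :: y :: l =>
    have hcocycle :
        eval (coboundaryCup s) (cone x (faces (y :: l))) = coboundaryCup s (y :: l) := by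
      have h := hs (x :: y :: l)
      rw [faces, map_add, eval_single] at h
      exact (CharTwo.add_eq_zero.mp h).symm
    rw [faces, map_add, eval_vertexCup_cone, hcocycle, eval_single, eval_single, vertexCup,
      coboundaryCup, Fin.cons_zero, Fin.tail_cons]
    ring

theorem eval_coboundaryCup_faces (s : Fin n → V → ZMod 2) (l : List V) :
    eval (coboundaryCup s) (faces l) = 0 := by
  induction n generalizing l with
  | zero => exact eval_coboundaryCup_zero_faces s l
  | succ n ih =>
    have hprimitive : eval (vertexCup (s 0) (Fin.tail s)) ∘ₗ boundary = eval (coboundaryCup s) :=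
      hom_ext fun l => by
        simpa using eval_vertexCup_faces (s 0) (ih (Fin.tail s)) l
    rw [← hprimitive, LinearMap.comp_apply, boundary_faces, map_zero]

theorem eval_vertexCup_boundary (f : V → ZMod 2) (s : Fin n → V → ZMod 2) (c : TupleChain V) :
    eval (vertexCup f s) (boundary c) = eval (coboundaryCup (Fin.cons f s)) c := by
  suffices eval (vertexCup f s) ∘ₗ boundary = eval (coboundaryCup (Fin.cons f s)) from
    LinearMap.congr_fun this c
  exact hom_ext fun l => by
    simpa using eval_vertexCup_faces f (eval_coboundaryCup_faces s) l

theorem exists_ne_of_coboundaryCup_ne_zero {s : Fin n → V → ZMod 2} {l : List V}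
    (hl : coboundaryCup s l ≠ 0) (i : Fin n) : ∃ x ∈ l, ∃ y ∈ l, s i x ≠ s i y := by
  induction n generalizing l with
  | zero => exact i.elim0
  | succ n ih =>
    match l with
    | [] | [_] => exact absurd rfl hl
    | x :: y :: l =>
      rw [coboundaryCup] at hl
      cases i using Fin.cases with
      | zero =>
        refine ⟨x, by simp, y, by simp, fun h => left_ne_zero_of_mul hl ?_⟩
        rw [h, CharTwo.add_self_eq_zero]
      | succ i =>
        obtain ⟨u, hu, v, hv, huv⟩ := ih (right_ne_zero_of_mul hl) i
        exact ⟨u, List.mem_cons_of_mem _ hu, v, List.mem_cons_of_mem _ hv, huv⟩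

theorem coboundaryCup_map_neg [Neg V] {s : Fin n → V → ZMod 2} {l : List V}
    (hs : ∀ i, ∀ x ∈ l, s i (-x) = s i x + 1) :
    coboundaryCup s (l.map (-·)) = coboundaryCup s l := by
  induction n generalizing l with
  | zero => rcases l with _ | ⟨x, _ | ⟨y, l⟩⟩ <;> rfl
  | succ n ih =>
    match l with
    | [] | [_] => rfl
    | x :: y :: l =>
      have htail := ih (s := Fin.tail s) (l := y :: l) fun i z hz =>
        hs i.succ z (List.mem_cons_of_mem _ hz)
      have hedge : s 0 (-x) + s 0 (-y) = s 0 x + s 0 y := by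
        rw [hs 0 x (by simp), hs 0 y (by simp), add_add_add_comm, CharTwo.add_self_eq_zero 1,
          add_zero]
      rw [List.map_cons] at htail
      rw [List.map_cons, List.map_cons, coboundaryCup, coboundaryCup, htail, hedge]

theorem vertexCup_map_neg_add [Neg V] {f : V → ZMod 2} {s : Fin n → V → ZMod 2} {l : List V}
    (hf : ∀ x ∈ l, f (-x) = f x + 1) (hs : ∀ i, ∀ x ∈ l, s i (-x) = s i x + 1) :
    vertexCup f s (l.map (-·)) + vertexCup f s l = coboundaryCup s l := by
  cases l with
  | nil => simp [vertexCup]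
  | cons x l =>
    have hneg := coboundaryCup_map_neg hs
    rw [List.map_cons] at hneg ⊢
    rw [vertexCup, vertexCup, hneg, hf x (by simp), ← add_mul, add_right_comm,
      CharTwo.add_self_eq_zero, zero_add, one_mul]

theorem eval_vertexCup_antipode_add [Neg V] {f : V → ZMod 2} {s : Fin n → V → ZMod 2} {S : Set V}
    (hf : ∀ x ∈ S, f (-x) = f x + 1) (hs : ∀ i, ∀ x ∈ S, s i (-x) = s i x + 1) {c : TupleChain V}
    (hc : c ∈ supported (ZMod 2) (ZMod 2) {l | ∀ x ∈ l, x ∈ S}) :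
    eval (vertexCup f s) (antipode c) + eval (vertexCup f s) c = eval (coboundaryCup s) c := by
  let F := eval (vertexCup f s) ∘ₗ antipode + eval (vertexCup f s) - eval (coboundaryCup s)
  have hF : F c ∈ (⊥ : Submodule (ZMod 2) (ZMod 2)) := by
    refine map_mem_of_mem_supported (fun l hl => ?_) hc
    have := vertexCup_map_neg_add (fun x hx => hf x (hl x hx)) fun i x hx => hs i x (hl x hx)
    simp [F, this]
  exact sub_eq_zero.mp hF

end Cup

section SmallTuples

variable {V : Type*} [PseudoMetricSpace V]

/-- The `k`-tuples in `C` whose entries are pairwise at distance at most `d`. -/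
def smallTuples (k : ℕ) (C : Set V) (d : ℝ) : Set (List V) :=
  {l | l.length = k ∧ (∀ x ∈ l, x ∈ C) ∧ ∀ x ∈ l, ∀ y ∈ l, dist x y ≤ d}

theorem smallTuples_mono {k : ℕ} {C D : Set V} {d : ℝ} (h : C ⊆ D) :
    smallTuples k C d ⊆ smallTuples k D d :=
  fun _ hl => ⟨hl.1, fun x hx => h (hl.2.1 x hx), hl.2.2⟩

theorem faces_mem_supported_smallTuples {k : ℕ} {C : Set V} {d : ℝ} {l : List V}
    (hl : l ∈ smallTuples (k + 1) C d) :
    faces l ∈ supported (ZMod 2) (ZMod 2) (smallTuples k C d) := by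
  obtain ⟨hlen, hC, hd⟩ := hl
  refine supported_mono ?_ (faces_mem_supported l)
  rintro m ⟨hm, hml⟩
  exact ⟨by omega, fun x hx => hC x (hml hx), fun x hx y hy => hd x (hml hx) y (hml hy)⟩

theorem cone_mem_supported_smallTuples {k : ℕ} {C : Set V} {d : ℝ} {b : V} (hb : b ∈ C)
    (hd : 0 ≤ d) {c : TupleChain V}
    (hc : c ∈ supported (ZMod 2) (ZMod 2) (smallTuples k (C ∩ closedBall b d) d)) :
    cone b c ∈ supported (ZMod 2) (ZMod 2) (smallTuples (k + 1) C d) := by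
  refine map_mem_of_mem_supported ?_ hc
  rintro l ⟨hlen, hl, hld⟩
  rw [cone_single]
  refine single_mem_supported _ _ ⟨by simp [hlen], ?_, ?_⟩
  · exact List.forall_mem_cons.mpr ⟨hb, fun x hx => (hl x hx).1⟩
  · simp only [List.forall_mem_cons, dist_self]
    exact ⟨⟨hd, fun y hy => mem_closedBall'.mp (hl y hy).2⟩,
      fun x hx => ⟨(hl x hx).2, hld x hx⟩⟩

end SmallTuples

section Subdivision

theorem sum_inv_length {V : Type*} {l : List V} (hl : l ≠ []) :
    ∑ _i : Fin l.length, (l.length : ℝ)⁻¹ = 1 := by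
  simp [hl]

variable {V : Type*} [AddCommGroup V] [Module ℝ V]

/-- The barycenter of the entries of a tuple, counted with multiplicity. -/
noncomputable def barycenter (l : List V) : V := (l.length : ℝ)⁻¹ • l.sum

theorem barycenter_eq_sum (l : List V) :
    barycenter l = ∑ i : Fin l.length, (l.length : ℝ)⁻¹ • l[i] := by
  rw [barycenter, ← Finset.smul_sum]
  exact congrArg _ (Fin.sum_univ_getElem l).symm

theorem barycenter_map_neg (l : List V) : barycenter (l.map (-·)) = -barycenter l := by
  have hsum : (l.map (-·)).sum = -l.sum := by
    induction l with
    | nil => simp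
    | cons a l ih => simp [ih, add_comm]
  rw [barycenter, barycenter, List.length_map, hsum, smul_neg]

theorem barycenter_mem {C : Set V} (hC : Convex ℝ C) {l : List V} (hl : l ≠ [])
    (hlC : ∀ x ∈ l, x ∈ C) : barycenter l ∈ C := by
  rw [barycenter_eq_sum]
  exact hC.sum_mem (fun _ _ => by positivity) (sum_inv_length hl) fun i _ =>
    hlC _ (List.getElem_mem _)

/-- Barycentric subdivision of `k`-tuples, with the recursion `Sd l = b(l) · Sd (∂ l)`. Only the
values on tuples of length `k` are meaningful. -/
noncomputable def subdivide : ℕ → (TupleChain V →ₗ[ZMod 2] TupleChain V)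
  | 0 => .id
  | k + 1 => linearCombination (ZMod 2) fun l => cone (barycenter l) (subdivide k (faces l))

theorem subdivide_succ_single (k : ℕ) (l : List V) :
    subdivide (k + 1) (single l 1) = cone (barycenter l) (subdivide k (faces l)) := by
  simp [subdivide]

theorem boundary_subdivide (k : ℕ) (c : TupleChain V) :
    boundary (subdivide (k + 1) c) = subdivide k (boundary c) := by
  suffices boundary ∘ₗ subdivide (k + 1) = subdivide k ∘ₗ boundary (V := V) from
    LinearMap.congr_fun this c
  refine hom_ext fun l => ?_
  have hcycle : boundary (subdivide k (faces l)) = 0 := by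
    cases k with
    | zero => exact boundary_faces l
    | succ k => rw [boundary_subdivide k, boundary_faces, map_zero]
  simp [subdivide_succ_single, boundary_cone, hcycle]

theorem antipode_subdivide (k : ℕ) (c : TupleChain V) :
    antipode (subdivide k c) = subdivide k (antipode c) := by
  induction k generalizing c with
  | zero => rfl
  | succ k ih =>
    suffices antipode ∘ₗ subdivide (k + 1) = subdivide (k + 1) ∘ₗ antipode (V := V) from
      LinearMap.congr_fun this c
    exact hom_ext fun l => by
      simp [subdivide_succ_single, antipode_cone, ih, antipode_faces, barycenter_map_neg]

theorem subdivide_one_single (x : V) : subdivide 1 (single [x] 1) = single [x] 1 := by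
  simp [subdivide, faces, barycenter]

theorem boundary_subdivide_pow (k N : ℕ) (c : TupleChain V) :
    boundary ((subdivide (k + 1) ^ N) c) = (subdivide k ^ N) (boundary c) := by
  rw [Module.End.pow_apply, Module.End.pow_apply]
  exact Function.Semiconj.iterate_right (boundary_subdivide k) N c

theorem antipode_subdivide_pow (k N : ℕ) (c : TupleChain V) :
    antipode ((subdivide k ^ N) c) = (subdivide k ^ N) (antipode c) := by
  rw [Module.End.pow_apply, Module.End.pow_apply]
  exact Function.Semiconj.iterate_right (antipode_subdivide k) N c

end Subdivision

section Mesh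

variable {V : Type*} [SeminormedAddCommGroup V] [NormedSpace ℝ V]

theorem dist_barycenter_le {l : List V} {x : V} (hx : x ∈ l) {d : ℝ} (h : ∀ y ∈ l, dist y x ≤ d) :
    dist (barycenter l) x ≤ (1 - (l.length : ℝ)⁻¹) * d := by
  obtain ⟨i, hi, rfl⟩ := List.getElem_of_mem hx
  let i₀ : Fin l.length := ⟨i, hi⟩
  have hlen : (l.length : ℝ) ≠ 0 := by exact_mod_cast (List.length_pos_of_mem hx).ne'
  have hsub : barycenter l - l[i₀] = ∑ j ∈ {i₀}ᶜ, (l.length : ℝ)⁻¹ • (l[j] - l[i₀]) := by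
    have hself : ∀ j ∉ ({i₀}ᶜ : Finset _), (l.length : ℝ)⁻¹ • (l[j] - l[i₀]) = 0 := by simp
    rw [Finset.sum_subset (Finset.subset_univ _) fun j _ => hself j]
    simp only [smul_sub, Finset.sum_sub_distrib, ← barycenter_eq_sum, ← Finset.sum_smul,
      sum_inv_length (List.ne_nil_of_mem hx), one_smul]
  calc dist (barycenter l) l[i₀] ≤ ∑ _j ∈ {i₀}ᶜ, (l.length : ℝ)⁻¹ * d := by
        rw [dist_eq_norm, hsub]
        refine norm_sum_le_of_le _ fun _ _ => ?_
        rw [norm_smul, norm_inv, RCLike.norm_natCast, ← dist_eq_norm]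
        gcongr
        exact h _ (List.getElem_mem _)
    _ = (1 - (l.length : ℝ)⁻¹) * d := by
        rw [Finset.sum_const, Finset.card_compl, Finset.card_singleton, Fintype.card_fin,
          nsmul_eq_mul, ← mul_assoc, Nat.cast_pred (List.length_pos_of_mem hx), sub_one_mul,
          mul_inv_cancel₀ hlen]

theorem subdivide_mem_supported_smallTuples {k n : ℕ} (hkn : k ≤ n) {C : Set V}
    (hC : Convex ℝ C) {d : ℝ} {c : TupleChain V}
    (hc : c ∈ supported (ZMod 2) (ZMod 2) (smallTuples k C d)) :
    subdivide k c ∈ supported (ZMod 2) (ZMod 2) (smallTuples k C ((1 - (n : ℝ)⁻¹) * d)) := by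
  induction k generalizing C c with
  | zero =>
    refine supported_mono ?_ hc
    rintro l ⟨hl, -⟩
    simp [smallTuples, List.length_eq_zero_iff.mp hl]
  | succ k ih =>
    refine map_mem_of_mem_supported (fun l hl => ?_) hc
    obtain ⟨hlen, hlC, hld⟩ := hl
    have hne : l ≠ [] := List.ne_nil_of_length_eq_add_one hlen
    obtain ⟨x₀, hx₀⟩ := List.exists_mem_of_ne_nil l hne
    have hd : 0 ≤ d := dist_nonneg.trans (hld x₀ hx₀ x₀ hx₀)
    have hball : ∀ x ∈ l, dist (barycenter l) x ≤ (1 - (n : ℝ)⁻¹) * d := fun x hx =>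
      (dist_barycenter_le hx fun y hy => hld y hy x hx).trans <| by
        rw [hlen]
        gcongr
    -- Cutting `C` down to a ball around the barycenter makes the induction hypothesis also bound
    -- the distances from the barycenter to the subdivided faces.
    have hfaces : faces l ∈ supported (ZMod 2) (ZMod 2)
        (smallTuples k (C ∩ closedBall (barycenter l) ((1 - (n : ℝ)⁻¹) * d)) d) :=
      faces_mem_supported_smallTuples
        ⟨hlen, fun x hx => ⟨hlC x hx, mem_closedBall'.mpr (hball x hx)⟩, hld⟩
    rw [subdivide_succ_single]
    exact cone_mem_supported_smallTuples (barycenter_mem hC hne hlC)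
      (dist_nonneg.trans (hball x₀ hx₀))
      (ih (by omega) (hC.inter (convex_closedBall _ _)) hfaces)

theorem subdivide_pow_mem_supported_smallTuples (N : ℕ) {k : ℕ} {C : Set V} (hC : Convex ℝ C)
    {d : ℝ} {c : TupleChain V} (hc : c ∈ supported (ZMod 2) (ZMod 2) (smallTuples k C d)) :
    (subdivide k ^ N) c ∈
      supported (ZMod 2) (ZMod 2) (smallTuples k C ((1 - (k : ℝ)⁻¹) ^ N * d)) := by
  induction N with
  | zero => simpa using hc
  | succ N ih =>
    rw [pow_succ', pow_succ', Module.End.mul_apply, mul_assoc]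
    exact subdivide_mem_supported_smallTuples le_rfl hC ih

end Mesh

section CrossPolytope

variable {V : Type*} [AddCommGroup V]

/-- The fundamental cycle of the boundary of the cross-polytope with vertices `± eᵢ`, as an iterated
suspension of the empty tuple. -/
noncomputable def crossPolytope : {n : ℕ} → (Fin n → V) → TupleChain V
  | 0, _ => single [] 1
  | _ + 1, e => cone (e 0) (crossPolytope (Fin.tail e)) + cone (-e 0) (crossPolytope (Fin.tail e))

/-- The half of `crossPolytope e` with apex `e 0`, bounded by the equator `± e 1, …, ± e n`. -/
noncomputable def hemisphere {n : ℕ} (e : Fin (n + 1) → V) : TupleChain V :=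
  cone (e 0) (crossPolytope (Fin.tail e))

theorem boundary_crossPolytope {n : ℕ} (e : Fin n → V) : boundary (crossPolytope e) = 0 := by
  induction n with
  | zero => exact boundary_single []
  | succ n ih =>
    rw [crossPolytope, map_add, boundary_cone, boundary_cone, ih, map_zero, map_zero,
      ZModModule.add_self]

theorem boundary_hemisphere {n : ℕ} (e : Fin (n + 1) → V) :
    boundary (hemisphere e) = crossPolytope (Fin.tail e) := by
  rw [hemisphere, boundary_cone, boundary_crossPolytope, map_zero, add_zero]

theorem antipode_crossPolytope {n : ℕ} (e : Fin n → V) :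
    antipode (crossPolytope e) = crossPolytope e := by
  induction n with
  | zero => exact antipode_single []
  | succ n ih =>
    rw [crossPolytope, map_add, antipode_cone, antipode_cone, ih, neg_neg, add_comm]

theorem crossPolytope_eq_antipode_hemisphere_add {n : ℕ} (e : Fin (n + 1) → V) :
    crossPolytope e = antipode (hemisphere e) + hemisphere e := by
  rw [hemisphere, antipode_cone, antipode_crossPolytope, crossPolytope]
  exact add_comm _ _

theorem crossPolytope_mem_supported {n : ℕ} (e : Fin n → V) :
    crossPolytope e ∈
      supported (ZMod 2) (ZMod 2) (Set.range fun ε : Fin n → ℤˣ => List.ofFn (ε • e)) := by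
  induction n with
  | zero => exact single_mem_supported _ _ ⟨1, List.ofFn_zero⟩
  | succ n ih =>
    have hcone (u : ℤˣ) : cone (u • e 0) (crossPolytope (Fin.tail e)) ∈
        supported (ZMod 2) (ZMod 2)
          (Set.range fun ε : Fin (n + 1) → ℤˣ => List.ofFn (ε • e)) := by
      refine map_mem_of_mem_supported ?_ (ih (Fin.tail e))
      rintro _ ⟨ε, rfl⟩
      rw [cone_single]
      exact single_mem_supported _ _ ⟨Fin.cons u ε, List.ofFn_succ⟩
    simpa [crossPolytope] using add_mem (hcone 1) (hcone (-1))

theorem hemisphere_mem_supported {n : ℕ} (e : Fin (n + 1) → V) :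
    hemisphere e ∈ supported (ZMod 2) (ZMod 2)
      (Set.range fun ε : Fin (n + 1) → ℤˣ => List.ofFn (ε • e)) := by
  refine map_mem_of_mem_supported ?_ (crossPolytope_mem_supported (Fin.tail e))
  rintro _ ⟨ε, rfl⟩
  rw [cone_single]
  refine single_mem_supported _ _ ⟨Fin.cons 1 ε, List.ofFn_succ.trans ?_⟩
  exact congrArg (· :: _) (one_smul ℤˣ (e 0))

end CrossPolytope

section Facets

variable {V : Type*} [AddCommGroup V] [Module ℝ V] {n : ℕ}

theorem zero_notMem_convexHull_range {ι : Type*} {v : ι → V} (hv : LinearIndependent ℝ v) :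
    (0 : V) ∉ convexHull ℝ (Set.range v) := by
  obtain ⟨φ, hφ⟩ := Module.exists_dual_forall_apply_eq_one (hv.linearIndepOn Set.univ)
  have hsub : convexHull ℝ (Set.range v) ⊆ φ ⁻¹' {1} :=
    convexHull_min (Set.range_subset_iff.mpr fun i => hφ i trivial)
      ((convex_singleton (𝕜 := ℝ) 1).linear_preimage φ)
  exact fun h => zero_ne_one ((map_zero φ).symm.trans (hsub h))

/-- The boundary of the cross-polytope with vertices `± eᵢ`, as the union of its facets. -/
def crossPolytopeBoundary (e : Fin n → V) : Set V :=
  ⋃ ε : Fin n → ℤˣ, convexHull ℝ (Set.range (ε • e))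

theorem zero_notMem_crossPolytopeBoundary {e : Fin n → V} (he : LinearIndependent ℝ e) :
    (0 : V) ∉ crossPolytopeBoundary e := by
  rw [crossPolytopeBoundary, Set.mem_iUnion]
  rintro ⟨ε, hε⟩
  exact zero_notMem_convexHull_range (he.group_smul ε) hε

end Facets

section SubdividedHemisphere

variable {V : Type*} [SeminormedAddCommGroup V] [NormedSpace ℝ V] {n : ℕ}

theorem isCompact_crossPolytopeBoundary (e : Fin n → V) : IsCompact (crossPolytopeBoundary e) :=
  isCompact_iUnion fun _ => (Set.finite_range _).isCompact_convexHull ℝ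

theorem subdivide_hemisphere_mem_supported (e : Fin (n + 1) → V) (N : ℕ) :
    (subdivide (n + 1) ^ N) (hemisphere e) ∈ supported (ZMod 2) (ZMod 2)
      (smallTuples (n + 1) (crossPolytopeBoundary e)
        ((1 - ((n + 1 : ℕ) : ℝ)⁻¹) ^ N * diam (crossPolytopeBoundary e))) := by
  refine map_mem_of_mem_supported ?_ (hemisphere_mem_supported e)
  rintro _ ⟨ε, rfl⟩
  have hfacet : convexHull ℝ (Set.range (ε • e)) ⊆ crossPolytopeBoundary e :=
    Set.subset_iUnion (fun ε : Fin (n + 1) → ℤˣ => convexHull ℝ (Set.range (ε • e))) ε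
  have hvertices : ∀ x ∈ List.ofFn (ε • e), x ∈ convexHull ℝ (Set.range (ε • e)) := fun x hx =>
    subset_convexHull ℝ _ ((List.mem_ofFn' _ _).mp hx)
  have hdiam : List.ofFn (ε • e) ∈ smallTuples (n + 1) (convexHull ℝ (Set.range (ε • e)))
      (diam (crossPolytopeBoundary e)) :=
    ⟨List.length_ofFn, hvertices, fun x hx y hy =>
      dist_le_diam_of_mem (isCompact_crossPolytopeBoundary e).isBounded
        (hfacet (hvertices x hx)) (hfacet (hvertices y hy))⟩
  exact supported_mono (smallTuples_mono hfacet) <|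
    subdivide_pow_mem_supported_smallTuples N (convex_convexHull ℝ _)
      (single_mem_supported _ _ hdiam)

theorem eval_coboundaryCup_subdivide_hemisphere {e : Fin (n + 1) → V}
    (he : LinearIndependent ℝ e) {s : Fin n → V → ZMod 2}
    (hs : ∀ i, ∀ x ≠ 0, s i (-x) = s i x + 1) (N : ℕ) :
    eval (coboundaryCup s) ((subdivide (n + 1) ^ N) (hemisphere e)) = 1 := by
  induction n with
  | zero =>
    have hfix : (subdivide 1 ^ N) (single [e 0] 1) = single [e 0] 1 := by
      rw [Module.End.pow_apply]
      exact Function.iterate_fixed (subdivide_one_single (e 0)) N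
    rw [hemisphere, crossPolytope, cone_single]
    exact (congrArg _ hfix).trans (eval_single _ _)
  | succ n ih =>
    have hequator : LinearIndependent ℝ (Fin.tail e) := he.comp _ (Fin.succ_injective _)
    have hnonzero : (subdivide (n + 1) ^ N) (hemisphere (Fin.tail e)) ∈
        supported (ZMod 2) (ZMod 2) {l | ∀ x ∈ l, x ∈ ({0}ᶜ : Set V)} := by
      refine supported_mono ?_ (subdivide_hemisphere_mem_supported (Fin.tail e) N)
      exact fun l hl x hx => ne_of_mem_of_not_mem (hl.2.1 x hx)
        (zero_notMem_crossPolytopeBoundary hequator)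
    calc eval (coboundaryCup s) ((subdivide (n + 2) ^ N) (hemisphere e))
        = eval (vertexCup (s 0) (Fin.tail s))
            ((subdivide (n + 1) ^ N) (crossPolytope (Fin.tail e))) := by
          rw [← boundary_hemisphere, ← boundary_subdivide_pow, eval_vertexCup_boundary,
            Fin.cons_self_tail]
      _ = eval (coboundaryCup (Fin.tail s))
            ((subdivide (n + 1) ^ N) (hemisphere (Fin.tail e))) := by
          rw [crossPolytope_eq_antipode_hemisphere_add, map_add, map_add,
            ← antipode_subdivide_pow]
          exact eval_vertexCup_antipode_add (hs 0) (fun i => hs i.succ) hnonzero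
      _ = 1 := ih hequator fun i => hs i.succ

theorem exists_mem_smallTuples_forall_exists_ne {e : Fin (n + 1) → V}
    (he : LinearIndependent ℝ e) {s : Fin n → V → ZMod 2}
    (hs : ∀ i, ∀ x ≠ 0, s i (-x) = s i x + 1) {δ : ℝ} (hδ : 0 < δ) :
    ∃ l ∈ smallTuples (n + 1) (crossPolytopeBoundary e) δ,
      ∀ i, ∃ x ∈ l, ∃ y ∈ l, s i x ≠ s i y := by
  have hmesh : Filter.Tendsto
      (fun N : ℕ => (1 - ((n + 1 : ℕ) : ℝ)⁻¹) ^ N * diam (crossPolytopeBoundary e))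
      Filter.atTop (nhds 0) := by
    rw [← zero_mul (diam (crossPolytopeBoundary e))]
    refine (tendsto_pow_atTop_nhds_zero_of_lt_one ?_ ?_).mul_const _
    · exact sub_nonneg.mpr (Nat.cast_inv_le_one _)
    · exact sub_lt_self 1 (by positivity)
  obtain ⟨N, hN⟩ := (hmesh.eventually_le_const hδ).exists
  obtain ⟨l, ⟨hlen, hlX, hld⟩, hl⟩ := exists_mem_ne_zero_of_eval_ne_zero
    (subdivide_hemisphere_mem_supported e N)
    (eval_coboundaryCup_subdivide_hemisphere he hs N ▸ one_ne_zero)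
  exact ⟨l, ⟨hlen, hlX, fun x hx y hy => (hld x hx y hy).trans hN⟩,
    exists_ne_of_coboundaryCup_ne_zero hl⟩

end SubdividedHemisphere

end TupleChain

section BorsukUlam

open TupleChain

/-- The sign of `g` as an element of `ZMod 2`. At the zeros of `g` it is read off a well-order of
`V`, so that the signs of `x` and `-x` differ there too. -/
noncomputable def antipodalSign {V : Type*} [Neg V] (g : V → ℝ) (x : V) : ZMod 2 :=
  open Classical in if 0 < g x ∨ g x = 0 ∧ WellOrderingRel x (-x) then 1 else 0

theorem antipodalSign_neg {V : Type*} [InvolutiveNeg V] {g : V → ℝ} {x : V}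
    (hg : g (-x) = -g x) (hx : -x ≠ x) : antipodalSign g (-x) = antipodalSign g x + 1 := by
  have hflip : (0 < g (-x) ∨ g (-x) = 0 ∧ WellOrderingRel (-x) (- -x)) ↔
      ¬(0 < g x ∨ g x = 0 ∧ WellOrderingRel x (-x)) := by
    rw [hg, neg_neg, neg_pos, neg_eq_zero]
    rcases lt_trichotomy (g x) 0 with h | h | h
    · simp [h, h.ne, h.not_gt]
    · rcases trichotomous_of WellOrderingRel x (-x) with hr | hr | hr
      · simp [h, hr, asymm_of WellOrderingRel hr]
      · exact absurd hr.symm hx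
      · simp [h, hr, asymm_of WellOrderingRel hr]
    · simp [h.ne', h, h.not_gt]
  classical
  rw [antipodalSign, antipodalSign, if_congr hflip rfl rfl, ite_not]
  split_ifs <;> decide

theorem mul_nonpos_of_antipodalSign_ne {V : Type*} [Neg V] {g : V → ℝ} {x y : V}
    (h : antipodalSign g x ≠ antipodalSign g y) : g x * g y ≤ 0 := by
  by_contra! hpos
  rcases pos_and_pos_or_neg_and_neg_of_mul_pos hpos with ⟨hx, hy⟩ | ⟨hx, hy⟩
  · exact h (by simp [antipodalSign, hx, hy])
  · exact h (by simp [antipodalSign, hx.ne, hx.not_gt, hy.ne, hy.not_gt])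

theorem abs_le_dist_of_mul_nonpos {a b : ℝ} (h : a * b ≤ 0) : |a| ≤ dist a b := by
  rw [Real.dist_eq]
  exact sq_le_sq.mp (by nlinarith [sq_nonneg b])

variable {V : Type*} [SeminormedAddCommGroup V] [NormedSpace ℝ V] {n : ℕ}

theorem exists_mem_crossPolytopeBoundary_norm_le {e : Fin (n + 1) → V}
    (he : LinearIndependent ℝ e) {G : V → Fin n → ℝ} (hodd : ∀ x ≠ 0, G (-x) = -G x)
    (hG : ContinuousOn G (crossPolytopeBoundary e)) {ε : ℝ} (hε : 0 < ε) :
    ∃ z ∈ crossPolytopeBoundary e, ‖G z‖ ≤ ε := by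
  obtain ⟨δ, hδ, hunif⟩ := Metric.uniformContinuousOn_iff_le.mp
    ((isCompact_crossPolytopeBoundary e).uniformContinuousOn_of_continuous hG) (ε / 2) (half_pos hε)
  have : IsAddTorsionFree V := .of_isTorsionFree ℝ V
  have hsign : ∀ i, ∀ x ≠ 0,
      antipodalSign (fun x => G x i) (-x) = antipodalSign (fun x => G x i) x + 1 := fun i x hx =>
    antipodalSign_neg (congrFun (hodd x hx) i) (neg_ne_self.mpr hx)
  obtain ⟨l, ⟨hlen, hlX, hld⟩, hl⟩ := exists_mem_smallTuples_forall_exists_ne he hsign hδ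
  have hclose : ∀ x ∈ l, ∀ y ∈ l, ∀ i, dist (G x i) (G y i) ≤ ε / 2 := fun x hx y hy i =>
    (dist_le_pi_dist _ _ i).trans (hunif x (hlX x hx) y (hlX y hy) (hld x hx y hy))
  obtain ⟨z, hz⟩ := List.exists_mem_of_ne_nil l (List.ne_nil_of_length_eq_add_one hlen)
  refine ⟨z, hlX z hz, (pi_norm_le_iff_of_nonneg hε.le).mpr fun i => ?_⟩
  obtain ⟨x, hx, y, hy, hxy⟩ := hl i
  have hxsmall : |G x i| ≤ ε / 2 :=
    (abs_le_dist_of_mul_nonpos (mul_nonpos_of_antipodalSign_ne hxy)).trans (hclose x hx y hy i)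
  calc ‖G z i‖ ≤ dist (G z i) (G x i) + ‖G x i‖ := by
        simpa using dist_triangle (G z i) (G x i) 0
    _ ≤ ε / 2 + ε / 2 := add_le_add (hclose z hz x hx i) hxsmall
    _ = ε := add_halves ε

theorem exists_mem_crossPolytopeBoundary_eq_zero {e : Fin (n + 1) → V}
    (he : LinearIndependent ℝ e) {G : V → Fin n → ℝ} (hodd : ∀ x ≠ 0, G (-x) = -G x)
    (hG : ContinuousOn G (crossPolytopeBoundary e)) :
    ∃ x ∈ crossPolytopeBoundary e, G x = 0 := by
  obtain ⟨z, hz, -⟩ := exists_mem_crossPolytopeBoundary_norm_le he hodd hG one_pos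
  obtain ⟨x, hx, hmin⟩ :=
    (isCompact_crossPolytopeBoundary e).exists_isMinOn ⟨z, hz⟩ hG.norm
  refine ⟨x, hx, norm_le_zero_iff.mp (le_of_forall_pos_le_add fun ε hε => ?_)⟩
  obtain ⟨y, hy, hyε⟩ := exists_mem_crossPolytopeBoundary_norm_le he hodd hG hε
  rw [zero_add]
  exact (hmin hy).trans hyε

variable {W : Type*} [AddCommGroup W] [Module ℝ W] [TopologicalSpace W]
  [IsTopologicalAddGroup W] [ContinuousSMul ℝ W] [T2Space W] [FiniteDimensional ℝ W]

theorem exists_ne_zero_eq_zero_of_finrank_lt_rank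
    (h : (Module.finrank ℝ W : Cardinal) < Module.rank ℝ V) {G : V → W}
    (hodd : ∀ x ≠ 0, G (-x) = -G x) (hG : ContinuousOn G {0}ᶜ) : ∃ x ≠ 0, G x = 0 := by
  obtain ⟨e, he⟩ := exists_linearIndependent_of_le_rank (R := ℝ) (M := V)
    (n := Module.finrank ℝ W + 1) (by exact_mod_cast Cardinal.add_one_le_of_lt h)
  have hne : ∀ x ∈ crossPolytopeBoundary e, x ≠ 0 := fun x hx =>
    ne_of_mem_of_not_mem hx (zero_notMem_crossPolytopeBoundary he)
  let φ : W ≃L[ℝ] (Fin (Module.finrank ℝ W) → ℝ) := (Module.finBasis ℝ W).equivFunL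
  obtain ⟨x, hx, hφx⟩ := exists_mem_crossPolytopeBoundary_eq_zero he (G := fun x => φ (G x))
    (fun x hx => by rw [hodd x hx, map_neg]) (φ.continuous.comp_continuousOn (hG.mono hne))
  exact ⟨x, hne x hx, φ.map_eq_zero_iff.mp hφx⟩

end BorsukUlam

open NormedSpace in
theorem antipodal_difference_has_zero_general {V W : Type*} [NormedAddCommGroup V]
    [NormedSpace ℝ V] [AddCommGroup W] [Module ℝ W] [TopologicalSpace W]
    [IsTopologicalAddGroup W] [ContinuousSMul ℝ W] [T2Space W] [FiniteDimensional ℝ W]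
    (h : (Module.finrank ℝ W : Cardinal) < Module.rank ℝ V) (f : sphere (0 : V) 1 → W)
    (hf : Continuous f) : ∃ x : sphere (0 : V) 1, f x - f (-x) = 0 := by
  let F : sphere (0 : V) 1 → W := fun x => f x - f (-x)
  have hF : Continuous F := hf.sub (hf.comp continuous_neg)
  let p : ({0}ᶜ : Set V) → sphere (0 : V) 1 := fun x =>
    ⟨normalize x.1, mem_sphere_zero_iff_norm.mpr (norm_normalize x.2)⟩
  have hp : Continuous p := by
    refine Continuous.subtype_mk ?_ _
    exact (continuous_subtype_val.norm.inv₀ fun x => norm_ne_zero_iff.mpr x.2).smul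
      continuous_subtype_val
  let G : V → W := Function.extend Subtype.val (F ∘ p) 0
  have hGp : ∀ x, G x.1 = F (p x) := Subtype.val_injective.extend_apply _ _
  have hodd : ∀ x ≠ 0, G (-x) = -G x := fun x hx => by
    have hneg : p ⟨-x, neg_ne_zero.mpr hx⟩ = -p ⟨x, hx⟩ := Subtype.ext (normalize_neg x)
    rw [hGp ⟨x, hx⟩, hGp ⟨-x, neg_ne_zero.mpr hx⟩, hneg]
    simp only [F, neg_neg, neg_sub]
  have hG : ContinuousOn G {0}ᶜ := by
    rw [continuousOn_iff_continuous_domRestrict]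
    exact (hF.comp hp).congr fun x => (hGp x).symm
  obtain ⟨x, hx, hGx⟩ := exists_ne_zero_eq_zero_of_finrank_lt_rank h hodd hG
  exact ⟨p ⟨x, hx⟩, (hGp ⟨x, hx⟩).symm.trans hGx⟩

/-- The antipodal-difference map of a continuous map `S^n → ℝ^n` has a zero. -/
theorem antipodal_difference_has_zero (n : ℕ)
    (f : Metric.sphere (0 : EuclideanSpace ℝ (Fin (n + 1))) 1 → EuclideanSpace ℝ (Fin n))
    (hf : Continuous f) :
    ∃ x : Metric.sphere (0 : EuclideanSpace ℝ (Fin (n + 1))) 1,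
      f x - f (-x) = 0 := by
  refine antipodal_difference_has_zero_general ?_ f hf
  simp [← Module.finrank_eq_rank]
end
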